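/- arXiv:2101.03728 — 4 statements merged into one kernel-verified Lean document; each statement's English description precedes it below -/
import Mathlib

section
/- Let s>1/2. Then for all f,g∈H^s(𝕋): ‖J^{−1}(Jf·g)‖_{H^s} ≤ C‖f‖_{H^s}‖g‖_{H^s}, where the constant C depends only on s. -/
/-!
In terms of the weighted amplitudes `⟨k⟩^s |f̂_k|`, which are in `ℓ²` exactly when `f ∈ H^s`, the
product `J^{-t}(J^t f · g)` is dominated by a convolution with kernel
`⟨k⟩^(s-t) ⟨k-j⟩^(t-s) ⟨j⟩^(-s)`. When `|s - t| ≤ s`, comparing the numerator frequency with the sum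
of the other two bounds the kernel by a multiple of `ω(j) + ω(k-j) + ω(k)`, where `ω(k) = ⟨k⟩^(-s)`
is in `ℓ²` because `s > 1/2`. Each of the three resulting terms is controlled by Cauchy–Schwarz:
with `A`, `B` the amplitudes of `f`, `g`, the first two have square at most `‖ω‖² (A² ∗ B²)(k)` and
the third at most `ω(k)² ‖A‖² ‖B‖²`, and both majorants have sum `‖ω‖² ‖A‖² ‖B‖²` over `k`.
-/

noncomputable section

open Complex MeasureTheory
open scoped BigOperators

/-- A function on the torus `𝕋 = (-π,π)` is represented by its sequence of Fourier
coefficients `f̂ : ℤ → ℂ`. -/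
abbrev FSeq := ℤ → ℂ

/-- Membership in the Sobolev space `H^s(𝕋)`:
`∑_{k∈ℤ} (1+k²)^s |f̂_k|² < ∞`. -/
def InHs (s : ℝ) (a : FSeq) : Prop :=
  Summable fun k : ℤ => (1 + (k : ℝ) ^ 2) ^ s * ‖a k‖ ^ 2

/-- The `H^s(𝕋)` norm: `‖f‖_{H^s}² = 2π ∑_{k∈ℤ} (1+k²)^s |f̂_k|²`. -/
def hnorm (s : ℝ) (a : FSeq) : ℝ :=
  Real.sqrt (2 * Real.pi * ∑' k : ℤ, (1 + (k : ℝ) ^ 2) ^ s * ‖a k‖ ^ 2)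

/-- Convolution of Fourier coefficient sequences: the coefficients of the
pointwise product of two functions. -/
def conv (a b : FSeq) : FSeq := fun k => ∑' j : ℤ, a (k - j) * b j

/-- The Bessel-potential operator `J^s`, a Fourier multiplier with symbol
`⟨k⟩^s = (1+k²)^{s/2}`. -/
def Jpow (s : ℝ) (a : FSeq) : FSeq := fun k => (((1 + (k : ℝ) ^ 2) ^ (s / 2) : ℝ) : ℂ) * a k

-- The larger of `y` and `z` is at least `x / 2`, so its power absorbs `x ^ r`.
lemma rpow_mul_rpow_neg_mul_rpow_neg_le {x y z r s : ℝ} (hx : 0 ≤ x) (hy : 0 < y) (hz : 0 < z)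
    (hr : 0 ≤ r) (hrs : r ≤ s) (h : x ≤ y + z) :
    x ^ r * y ^ (-r) * z ^ (-s) ≤ 2 ^ r * (z ^ (-s) + y ^ (-s)) := by
  have rpow_le_of_le_two_mul {w : ℝ} (hw : 0 ≤ w) (hxw : x ≤ 2 * w) : x ^ r ≤ 2 ^ r * w ^ r :=
    (Real.rpow_le_rpow hx hxw hr).trans_eq (Real.mul_rpow zero_le_two hw)
  rcases le_total z y with hzy | hyz
  · calc x ^ r * y ^ (-r) * z ^ (-s) ≤ (2 ^ r * y ^ r) * y ^ (-r) * z ^ (-s) := by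
          gcongr; exact rpow_le_of_le_two_mul hy.le (by linarith)
      _ = 2 ^ r * z ^ (-s) := by
          rw [mul_assoc (2 ^ r), ← Real.rpow_add hy, add_neg_cancel, Real.rpow_zero, mul_one]
      _ ≤ 2 ^ r * (z ^ (-s) + y ^ (-s)) := by
          gcongr; exact le_add_of_nonneg_right (by positivity)
  · calc x ^ r * y ^ (-r) * z ^ (-s) ≤ (2 ^ r * z ^ r) * y ^ (-r) * z ^ (-s) := by
          gcongr; exact rpow_le_of_le_two_mul hz.le (by linarith)
      _ = 2 ^ r * (z ^ (r - s) * y ^ (-r)) := by rw [sub_eq_add_neg, Real.rpow_add hz]; ring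
      _ ≤ 2 ^ r * (y ^ (r - s) * y ^ (-r)) := by
          gcongr 2 ^ r * (?_ * _)
          exact Real.rpow_le_rpow_of_nonpos hy hyz (by linarith)
      _ = 2 ^ r * y ^ (-s) := by rw [← Real.rpow_add hy]; ring_nf
      _ ≤ 2 ^ r * (z ^ (-s) + y ^ (-s)) := by
          gcongr; exact le_add_of_nonneg_left (by positivity)

section Bracket

variable {E : Type*} [SeminormedAddCommGroup E]

/-- The Japanese bracket `⟨x⟩ = (1 + ‖x‖²)^{1/2}`. -/
def bracket (x : E) : ℝ := √(1 + ‖x‖ ^ 2)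

lemma bracket_pos (x : E) : 0 < bracket x := Real.sqrt_pos.2 (by positivity)

lemma bracket_sq (x : E) : bracket x ^ 2 = 1 + ‖x‖ ^ 2 := Real.sq_sqrt (by positivity)

lemma norm_le_bracket (x : E) : ‖x‖ ≤ bracket x := Real.le_sqrt_of_sq_le (by linarith)

lemma bracket_neg (x : E) : bracket (-x) = bracket x := by rw [bracket, norm_neg, bracket]

lemma bracket_add_le (x y : E) : bracket (x + y) ≤ bracket x + bracket y := by
  have hx := bracket_pos x
  have hy := bracket_pos y
  refine Real.sqrt_le_iff.2 ⟨by positivity, ?_⟩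
  have hmul : ‖x‖ * ‖y‖ ≤ bracket x * bracket y := by
    gcongr <;> exact norm_le_bracket _
  calc 1 + ‖x + y‖ ^ 2 ≤ 1 + (‖x‖ + ‖y‖) ^ 2 := by gcongr; exact norm_add_le x y
    _ ≤ (1 + ‖x‖ ^ 2) + (1 + ‖y‖ ^ 2) + 2 * (bracket x * bracket y) := by linarith
    _ = (bracket x + bracket y) ^ 2 := by rw [← bracket_sq, ← bracket_sq]; ring

lemma bracket_rpow_mul_rpow_neg_mul_rpow_neg_le {r s : ℝ} (hrs : |r| ≤ s) (x y : E) :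
    bracket (x + y) ^ r * bracket x ^ (-r) * bracket y ^ (-s) ≤
      2 ^ |r| * (bracket y ^ (-s) + bracket x ^ (-s) + bracket (x + y) ^ (-s)) := by
  have hx := bracket_pos x
  have hy := bracket_pos y
  have hxy := bracket_pos (x + y)
  rcases le_total 0 r with hr | hr
  · rw [abs_of_nonneg hr] at hrs ⊢
    refine (rpow_mul_rpow_neg_mul_rpow_neg_le hxy.le hx hy hr hrs (bracket_add_le x y)).trans ?_
    gcongr 2 ^ r * ?_
    exact le_add_of_nonneg_right (by positivity)
  · rw [abs_of_nonpos hr] at hrs ⊢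
    have hsub : bracket x ≤ bracket (x + y) + bracket y := by
      simpa only [add_neg_cancel_right, bracket_neg] using bracket_add_le (x + y) (-y)
    have hle := rpow_mul_rpow_neg_mul_rpow_neg_le hx.le hxy hy (neg_nonneg.2 hr) hrs hsub
    rw [neg_neg, mul_comm (bracket x ^ (-r))] at hle
    refine hle.trans ?_
    rw [add_right_comm]
    gcongr 2 ^ (-r) * ?_
    exact le_add_of_nonneg_right (by positivity)

lemma bracket_int_rpow (k : ℤ) (r : ℝ) : bracket k ^ r = (1 + (k : ℝ) ^ 2) ^ (r / 2) := by
  rw [bracket, Int.norm_eq_abs, sq_abs, Real.sqrt_eq_rpow, ← Real.rpow_mul (by positivity)]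
  ring_nf

lemma summable_bracket_rpow_neg_sq {s : ℝ} (hs : 1 / 2 < s) :
    Summable fun k : ℤ => (bracket k ^ (-s)) ^ 2 := by
  refine Summable.of_norm_bounded_eventually
    (Real.summable_abs_int_rpow (b := 2 * s) (by linarith)) ?_
  filter_upwards [(Set.finite_singleton (0 : ℤ)).compl_mem_cofinite] with k hk
  have hk_pos : 0 < |(k : ℝ)| := abs_pos.2 (Int.cast_ne_zero.2 hk)
  have hk_le : |(k : ℝ)| ≤ bracket k := (Int.norm_eq_abs k).symm.trans_le (norm_le_bracket k)
  rw [Real.norm_of_nonneg (by positivity), ← Real.rpow_mul_natCast (bracket_pos k).le]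
  refine (Real.rpow_le_rpow_of_nonpos hk_pos hk_le ?_).trans_eq ?_ <;> push_cast
  · linarith
  · ring_nf

end Bracket

section SquareSummable

variable {ι : Type*} {a b : ι → ℝ}

lemma summable_mul_of_summable_sq (ha : Summable fun i => a i ^ 2)
    (hb : Summable fun i => b i ^ 2) : Summable fun i => a i * b i := by
  refine (ha.add hb).of_norm_bounded fun i => ?_
  rw [Real.norm_eq_abs, abs_le]
  constructor <;> nlinarith [sq_nonneg (a i + b i), sq_nonneg (a i - b i)]

lemma sq_tsum_mul_le_tsum_sq_mul_tsum_sq (ha : Summable fun i => a i ^ 2)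
    (hb : Summable fun i => b i ^ 2) :
    (∑' i, a i * b i) ^ 2 ≤ (∑' i, a i ^ 2) * ∑' i, b i ^ 2 :=
  le_of_tendsto_of_tendsto' ((summable_mul_of_summable_sq ha hb).hasSum.pow 2)
    (Filter.Tendsto.mul ha.hasSum hb.hasSum) fun t => Finset.sum_mul_sq_le_sq_mul_sq t a b

end SquareSummable

section Convolution

variable {G : Type*} [AddCommGroup G]

section Ring

variable {R : Type*} [NormedRing R] [CompleteSpace R] {u v : G → R}

lemma hasSum_sub_mul (hu : Summable fun k => ‖u k‖) (hv : Summable fun k => ‖v k‖) :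
    HasSum (fun p : G × G => u (p.1 - p.2) * v p.2) ((∑' k, u k) * ∑' k, v k) := by
  let shear : G × G ≃ G × G :=
    (Equiv.prodComm G G).trans <|
      ((Equiv.refl G).prodShear Equiv.subRight).trans (Equiv.prodComm G G)
  rw [tsum_mul_tsum_of_summable_norm hu hv]
  exact shear.hasSum_iff.2 (summable_mul_of_summable_norm hu hv).hasSum

lemma hasSum_tsum_sub_mul (hu : Summable fun k => ‖u k‖) (hv : Summable fun k => ‖v k‖) :
    HasSum (fun k => ∑' j, u (k - j) * v j) ((∑' k, u k) * ∑' k, v k) :=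
  have h := hasSum_sub_mul hu hv
  h.prod_fiberwise fun k => (h.summable.prod_factor k).hasSum

end Ring

/-- The convolution of `A` and `B` with the kernel `ω(j) + ω(k-j) + ω(k)`. For `ω = ⟨·⟩^(-s)` it
dominates, up to a constant, the weighted amplitudes of `J^{-t}(J^t f · g)`. -/
def weightedConv (ω A B : G → ℝ) (k : G) : ℝ :=
  ∑' j, (ω j + ω (k - j) + ω k) * (A (k - j) * B j)

variable {ω A B : G → ℝ}

lemma summable_comp_sub_left {u : G → ℝ} (hu : Summable u) (k : G) :
    Summable fun j => u (k - j) :=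
  (Equiv.subLeft k).summable_iff.2 hu

lemma summable_sq_sub_mul (hA : Summable fun k => A k ^ 2) (hB : Summable fun k => B k ^ 2)
    (k : G) : Summable fun j => (A (k - j) * B j) ^ 2 := by
  simpa only [mul_pow] using (hasSum_sub_mul hA.norm hB.norm).summable.prod_factor k

lemma hasSum_weightedConv (hω : Summable fun k => ω k ^ 2) (hA : Summable fun k => A k ^ 2)
    (hB : Summable fun k => B k ^ 2) (k : G) :
    HasSum (fun j => (ω j + ω (k - j) + ω k) * (A (k - j) * B j))
      (∑' j, ω j * (A (k - j) * B j) + ∑' j, ω (k - j) * (A (k - j) * B j) +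
        ω k * ∑' j, A (k - j) * B j) := by
  have hAB := summable_sq_sub_mul hA hB k
  simp only [add_mul]
  exact ((summable_mul_of_summable_sq hω hAB).hasSum.add
    (summable_mul_of_summable_sq (summable_comp_sub_left hω k) hAB).hasSum).add
      ((summable_mul_of_summable_sq (summable_comp_sub_left hA k) hB).hasSum.mul_left (ω k))

lemma weightedConv_sq_le (hω : Summable fun k => ω k ^ 2) (hA : Summable fun k => A k ^ 2)
    (hB : Summable fun k => B k ^ 2) (k : G) :
    weightedConv ω A B k ^ 2 ≤
      6 * (∑' j, ω j ^ 2) * (∑' j, A (k - j) ^ 2 * B j ^ 2) +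
        3 * ((∑' j, A j ^ 2) * ∑' j, B j ^ 2) * ω k ^ 2 := by
  have hAB := summable_sq_sub_mul hA hB k
  have tsum_comp_sub (u : G → ℝ) : ∑' j, u (k - j) = ∑' j, u j := (Equiv.subLeft k).tsum_eq u
  have hleft := sq_tsum_mul_le_tsum_sq_mul_tsum_sq hω hAB
  have hright := sq_tsum_mul_le_tsum_sq_mul_tsum_sq (summable_comp_sub_left hω k) hAB
  have hdiag := sq_tsum_mul_le_tsum_sq_mul_tsum_sq (summable_comp_sub_left hA k) hB
  rw [tsum_comp_sub fun j => ω j ^ 2] at hright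
  rw [tsum_comp_sub fun j => A j ^ 2] at hdiag
  have hdiag' := mul_le_mul_of_nonneg_left hdiag (sq_nonneg (ω k))
  have add_three_sq_le (x y z : ℝ) : (x + y + z) ^ 2 ≤ 3 * (x ^ 2 + y ^ 2 + z ^ 2) := by
    linarith [sq_nonneg (x - y), sq_nonneg (y - z), sq_nonneg (x - z)]
  simp only [mul_pow (A _)] at hleft hright
  rw [weightedConv, (hasSum_weightedConv hω hA hB k).tsum_eq]
  refine (add_three_sq_le _ _ _).trans ?_
  rw [mul_pow]
  linarith

lemma hasSum_weightedConv_sq_bound (hω : Summable fun k => ω k ^ 2)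
    (hA : Summable fun k => A k ^ 2) (hB : Summable fun k => B k ^ 2) :
    HasSum (fun k => 6 * (∑' j, ω j ^ 2) * (∑' j, A (k - j) ^ 2 * B j ^ 2) +
        3 * ((∑' j, A j ^ 2) * ∑' j, B j ^ 2) * ω k ^ 2)
      (9 * (∑' k, ω k ^ 2) * ((∑' k, A k ^ 2) * ∑' k, B k ^ 2)) := by
  have htotal (S X Y : ℝ) : 9 * S * (X * Y) = 6 * S * (X * Y) + 3 * (X * Y) * S := by ring
  rw [htotal]
  exact ((hasSum_tsum_sub_mul hA.norm hB.norm).mul_left _).add (hω.hasSum.mul_left _)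

lemma summable_weightedConv_sq (hω : Summable fun k => ω k ^ 2) (hA : Summable fun k => A k ^ 2)
    (hB : Summable fun k => B k ^ 2) : Summable fun k => weightedConv ω A B k ^ 2 :=
  (hasSum_weightedConv_sq_bound hω hA hB).summable.of_nonneg_of_le (fun _ => sq_nonneg _)
    (weightedConv_sq_le hω hA hB)

lemma tsum_weightedConv_sq_le (hω : Summable fun k => ω k ^ 2) (hA : Summable fun k => A k ^ 2)
    (hB : Summable fun k => B k ^ 2) :
    ∑' k, weightedConv ω A B k ^ 2 ≤
      9 * (∑' k, ω k ^ 2) * ((∑' k, A k ^ 2) * ∑' k, B k ^ 2) :=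
  hasSum_le (weightedConv_sq_le hω hA hB) (summable_weightedConv_sq hω hA hB).hasSum
    (hasSum_weightedConv_sq_bound hω hA hB)

end Convolution

section Sobolev

variable {s t : ℝ} {f g : FSeq}

/-- The weighted amplitudes `⟨k⟩^s |â_k|`, whose `ℓ²` norm is the `H^s` norm of `a` up to the factor
`√(2π)`. -/
def sobolevAmp (s : ℝ) (a : FSeq) (k : ℤ) : ℝ := bracket k ^ s * ‖a k‖

lemma sobolevAmp_nonneg (s : ℝ) (a : FSeq) (k : ℤ) : 0 ≤ sobolevAmp s a k :=
  mul_nonneg (Real.rpow_nonneg (bracket_pos k).le s) (norm_nonneg _)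

lemma sobolevAmp_sq (s : ℝ) (a : FSeq) (k : ℤ) :
    sobolevAmp s a k ^ 2 = (1 + (k : ℝ) ^ 2) ^ s * ‖a k‖ ^ 2 := by
  rw [sobolevAmp, mul_pow, ← Real.rpow_mul_natCast (bracket_pos k).le, bracket_int_rpow,
    Nat.cast_ofNat, mul_div_cancel_right₀ s two_ne_zero]

lemma inHs_iff_summable_sobolevAmp_sq {a : FSeq} :
    InHs s a ↔ Summable fun k => sobolevAmp s a k ^ 2 := by
  simp only [InHs, sobolevAmp_sq]

lemma hnorm_sq (s : ℝ) (a : FSeq) :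
    hnorm s a ^ 2 = 2 * Real.pi * ∑' k, sobolevAmp s a k ^ 2 := by
  simp only [hnorm, ← sobolevAmp_sq]
  exact Real.sq_sqrt (by positivity)

lemma rpow_mul_sobolevAmp (r s : ℝ) (a : FSeq) (k : ℤ) :
    bracket k ^ r * sobolevAmp s a k = sobolevAmp (r + s) a k := by
  rw [sobolevAmp, sobolevAmp, Real.rpow_add (bracket_pos k), mul_assoc]

lemma norm_Jpow (t : ℝ) (a : FSeq) (k : ℤ) : ‖Jpow t a k‖ = sobolevAmp t a k := by
  rw [Jpow, ← bracket_int_rpow, norm_mul, Complex.norm_real,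
    Real.norm_of_nonneg (Real.rpow_nonneg (bracket_pos k).le t), sobolevAmp]

lemma sobolevAmp_Jpow (s t : ℝ) (a : FSeq) (k : ℤ) :
    sobolevAmp s (Jpow t a) k = sobolevAmp (s + t) a k := by
  rw [sobolevAmp, norm_Jpow, rpow_mul_sobolevAmp]

lemma rpow_mul_norm_Jpow_mul_le (hst : |s - t| ≤ s) (f g : FSeq) (k j : ℤ) :
    bracket k ^ (s - t) * ‖Jpow t f (k - j) * g j‖ ≤
      2 ^ |s - t| * ((bracket j ^ (-s) + bracket (k - j) ^ (-s) + bracket k ^ (-s)) *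
        (sobolevAmp s f (k - j) * sobolevAmp s g j)) := by
  have hf : ‖Jpow t f (k - j)‖ = bracket (k - j) ^ (-(s - t)) * sobolevAmp s f (k - j) := by
    rw [norm_Jpow, rpow_mul_sobolevAmp, neg_sub, sub_add_cancel]
  have hg : ‖g j‖ = bracket j ^ (-s) * sobolevAmp s g j := by
    rw [rpow_mul_sobolevAmp, neg_add_cancel, sobolevAmp, Real.rpow_zero, one_mul]
  have hkernel := bracket_rpow_mul_rpow_neg_mul_rpow_neg_le hst (k - j) j
  rw [sub_add_cancel] at hkernel
  calc bracket k ^ (s - t) * ‖Jpow t f (k - j) * g j‖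
      = bracket k ^ (s - t) * bracket (k - j) ^ (-(s - t)) * bracket j ^ (-s) *
          (sobolevAmp s f (k - j) * sobolevAmp s g j) := by rw [norm_mul, hf, hg]; ring
    _ ≤ _ := mul_le_mul_of_nonneg_right hkernel
        (mul_nonneg (sobolevAmp_nonneg _ _ _) (sobolevAmp_nonneg _ _ _))
    _ = _ := mul_assoc _ _ _

lemma summable_weightedConv_sobolevAmp (hs : 1 / 2 < s) (hf : InHs s f) (hg : InHs s g) (k : ℤ) :
    Summable fun j => (bracket j ^ (-s) + bracket (k - j) ^ (-s) + bracket k ^ (-s)) *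
      (sobolevAmp s f (k - j) * sobolevAmp s g j) :=
  (hasSum_weightedConv (summable_bracket_rpow_neg_sq hs) (inHs_iff_summable_sobolevAmp_sq.1 hf)
    (inHs_iff_summable_sobolevAmp_sq.1 hg) k).summable

lemma summable_norm_Jpow_mul (hs : 1 / 2 < s) (hst : |s - t| ≤ s) (hf : InHs s f)
    (hg : InHs s g) (k : ℤ) : Summable fun j => ‖Jpow t f (k - j) * g j‖ := by
  have hk := Real.rpow_pos_of_pos (bracket_pos k) (s - t)
  refine (summable_mul_left_iff hk.ne').1 ?_
  exact ((summable_weightedConv_sobolevAmp hs hf hg k).mul_left (2 ^ |s - t|)).of_nonneg_of_le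
    (fun j => by positivity) (rpow_mul_norm_Jpow_mul_le hst f g k)

lemma sobolevAmp_Jpow_neg_conv_Jpow_le (hs : 1 / 2 < s) (hst : |s - t| ≤ s) (hf : InHs s f)
    (hg : InHs s g) (k : ℤ) :
    sobolevAmp s (Jpow (-t) (conv (Jpow t f) g)) k ≤
      2 ^ |s - t| *
        weightedConv (fun k => bracket k ^ (-s)) (sobolevAmp s f) (sobolevAmp s g) k := by
  have hk := Real.rpow_pos_of_pos (bracket_pos k) (s - t)
  have hsum := summable_norm_Jpow_mul hs hst hf hg k
  have hbound := (summable_weightedConv_sobolevAmp hs hf hg k).mul_left (2 ^ |s - t|)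
  calc sobolevAmp s (Jpow (-t) (conv (Jpow t f) g)) k
      = bracket k ^ (s - t) * ‖∑' j, Jpow t f (k - j) * g j‖ := by
        rw [sobolevAmp_Jpow, ← sub_eq_add_neg, sobolevAmp, conv]
    _ ≤ bracket k ^ (s - t) * ∑' j, ‖Jpow t f (k - j) * g j‖ := by
        gcongr; exact norm_tsum_le_tsum_norm hsum
    _ = ∑' j, bracket k ^ (s - t) * ‖Jpow t f (k - j) * g j‖ := tsum_mul_left.symm
    _ ≤ _ := (hsum.mul_left _).tsum_le_tsum (rpow_mul_norm_Jpow_mul_le hst f g k) hbound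
    _ = _ := tsum_mul_left

lemma sobolevAmp_Jpow_neg_conv_Jpow_sq_le (hs : 1 / 2 < s) (hst : |s - t| ≤ s) (hf : InHs s f)
    (hg : InHs s g) (k : ℤ) :
    sobolevAmp s (Jpow (-t) (conv (Jpow t f) g)) k ^ 2 ≤
      (2 ^ |s - t|) ^ 2 *
        weightedConv (fun k => bracket k ^ (-s)) (sobolevAmp s f) (sobolevAmp s g) k ^ 2 := by
  rw [← mul_pow]
  exact pow_le_pow_left₀ (sobolevAmp_nonneg _ _ _)
    (sobolevAmp_Jpow_neg_conv_Jpow_le hs hst hf hg k) 2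

lemma InHs.Jpow_neg_conv_Jpow (hs : 1 / 2 < s) (hst : |s - t| ≤ s) (hf : InHs s f)
    (hg : InHs s g) : InHs s (Jpow (-t) (conv (Jpow t f) g)) := by
  have hA := inHs_iff_summable_sobolevAmp_sq.1 hf
  have hB := inHs_iff_summable_sobolevAmp_sq.1 hg
  have hconv := summable_weightedConv_sq (summable_bracket_rpow_neg_sq hs) hA hB
  exact inHs_iff_summable_sobolevAmp_sq.2 <| (hconv.mul_left _).of_nonneg_of_le
    (fun _ => sq_nonneg _) (sobolevAmp_Jpow_neg_conv_Jpow_sq_le hs hst hf hg)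

lemma tsum_sobolevAmp_Jpow_neg_conv_Jpow_sq_le (hs : 1 / 2 < s) (hst : |s - t| ≤ s)
    (hf : InHs s f) (hg : InHs s g) :
    ∑' k, sobolevAmp s (Jpow (-t) (conv (Jpow t f) g)) k ^ 2 ≤
      (2 ^ |s - t|) ^ 2 * (9 * (∑' k : ℤ, (bracket k ^ (-s)) ^ 2) *
        ((∑' k, sobolevAmp s f k ^ 2) * ∑' k, sobolevAmp s g k ^ 2)) := by
  have hω := summable_bracket_rpow_neg_sq hs
  have hA := inHs_iff_summable_sobolevAmp_sq.1 hf
  have hB := inHs_iff_summable_sobolevAmp_sq.1 hg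
  have hprod := inHs_iff_summable_sobolevAmp_sq.1 (hf.Jpow_neg_conv_Jpow hs hst hg)
  calc _ ≤ ∑' k, (2 ^ |s - t|) ^ 2 *
          weightedConv (fun k => bracket k ^ (-s)) (sobolevAmp s f) (sobolevAmp s g) k ^ 2 :=
        hprod.tsum_le_tsum (sobolevAmp_Jpow_neg_conv_Jpow_sq_le hs hst hf hg)
          ((summable_weightedConv_sq hω hA hB).mul_left _)
    _ = (2 ^ |s - t|) ^ 2 * ∑' k,
          weightedConv (fun k => bracket k ^ (-s)) (sobolevAmp s f) (sobolevAmp s g) k ^ 2 :=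
        tsum_mul_left
    _ ≤ _ := by gcongr; exact tsum_weightedConv_sq_le hω hA hB

end Sobolev

theorem Jinv_product_Hs_general (s t : ℝ) (hs : 1 / 2 < s) (ht : 0 ≤ t) (hts : t ≤ 2 * s) :
    ∃ C : ℝ, 0 < C ∧ ∀ f g : FSeq, InHs s f → InHs s g →
      InHs s (Jpow (-t) (conv (Jpow t f) g)) ∧
        hnorm s (Jpow (-t) (conv (Jpow t f) g)) ≤ C * hnorm s f * hnorm s g := by
  have hst : |s - t| ≤ s := abs_le.2 ⟨by linarith, by linarith⟩
  set S : ℝ := ∑' k : ℤ, (bracket k ^ (-s)) ^ 2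
  have hS_pos : 0 < S := (summable_bracket_rpow_neg_sq hs).tsum_pos (fun _ => sq_nonneg _) 0 <|
    pow_pos (Real.rpow_pos_of_pos (bracket_pos _) _) 2
  refine ⟨3 * 2 ^ |s - t| * √(S / (2 * Real.pi)), by positivity, fun f g hf hg =>
    ⟨hf.Jpow_neg_conv_Jpow hs hst hg, ?_⟩⟩
  have hf_nonneg : 0 ≤ hnorm s f := Real.sqrt_nonneg _
  have hg_nonneg : 0 ≤ hnorm s g := Real.sqrt_nonneg _
  refine le_of_sq_le_sq ?_ (by positivity)
  calc hnorm s (Jpow (-t) (conv (Jpow t f) g)) ^ 2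
      ≤ 2 * Real.pi * ((2 ^ |s - t|) ^ 2 * (9 * S *
          ((∑' k, sobolevAmp s f k ^ 2) * ∑' k, sobolevAmp s g k ^ 2))) := by
        rw [hnorm_sq]
        gcongr
        exact tsum_sobolevAmp_Jpow_neg_conv_Jpow_sq_le hs hst hf hg
    _ = (3 * 2 ^ |s - t| * √(S / (2 * Real.pi)) * hnorm s f * hnorm s g) ^ 2 := by
        simp only [mul_pow _ _ 2, hnorm_sq, Real.sq_sqrt (div_nonneg hS_pos.le Real.two_pi_pos.le)]
        field_simp
        ring

theorem Jinv_product_Hs (s : ℝ) (hs : 1 / 2 < s) :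
    ∃ C : ℝ, 0 < C ∧ ∀ f g : FSeq, InHs s f → InHs s g →
      hnorm s (Jpow (-1) (conv (Jpow 1 f) g)) ≤ C * hnorm s f * hnorm s g := by
  obtain ⟨C, hC, h⟩ := Jinv_product_Hs_general s 1 hs zero_le_one (by linarith)
  exact ⟨C, hC, fun f g hf hg => (h f g hf hg).2⟩

end
end

section
/- For all f,g∈H¹(𝕋): ‖J^{−1}(Jf·g)‖_{L²} ≤ C·min{‖f‖_{L²}‖g‖_{H¹}, ‖g‖_{L²}‖f‖_{H¹}}, where C is an absolute constant. -/
/-!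
On the Fourier side the `k`-th coefficient of `J^{-s}(J^s f · g)` is at most
`⟨k⟩^{-s} ∑_j ⟨k-j⟩^s |f̂_{k-j}| |ĝ_j|`, and for `s > 1/2` the sequence `⟨·⟩^{-s}` lies in `ℓ²`.

* With `J^s f` and `g` both in `L²`, the sum over `j` is bounded uniformly in `k` by
  Cauchy–Schwarz, and the factor `⟨k⟩^{-s}` makes the result square summable (`L¹ ⊂ H^{-s}`).
* With `f` in `L²` and `g` in `H^s`, the inequality `⟨k-j⟩^s ≲ ⟨k⟩^s + ⟨j⟩^s` leaves two terms.
  Where `⟨k⟩^s` appears it cancels `⟨k⟩^{-s}`, and `ĝ = ⟨·⟩^{-s} (⟨·⟩^s ĝ)` is in `ℓ¹`, so that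
  Young's inequality `ℓ² * ℓ¹ ⊂ ℓ²` applies. Where `⟨j⟩^s` appears it falls on `g`, and the
  previous argument applies to `f` and `J^s g`.

Both estimates are made in `ℝ≥0∞`, where no summability has to be tracked.
-/

noncomputable section

open Complex MeasureTheory
open scoped BigOperators

open scoped ENNReal

lemma ennreal_tsum_mul_sq_le {ι : Type*} (u v : ι → ℝ≥0∞) :
    (∑' i, u i * v i) ^ 2 ≤ (∑' i, u i ^ 2) * ∑' i, v i ^ 2 := by
  let _ : MeasurableSpace ι := ⊤
  have holder := ENNReal.lintegral_mul_le_Lp_mul_Lq Measure.count Real.HolderConjugate.two_two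
    (measurable_from_top (f := u)).aemeasurable (measurable_from_top (f := v)).aemeasurable
  simp only [lintegral_count, Pi.mul_apply, ENNReal.rpow_two] at holder
  have rpow_half_sq (x : ℝ≥0∞) : (x ^ (1 / 2 : ℝ)) ^ 2 = x := by
    rw [← ENNReal.rpow_mul_natCast]
    norm_num
  calc (∑' i, u i * v i) ^ 2
      ≤ ((∑' i, u i ^ 2) ^ (1 / 2 : ℝ) * (∑' i, v i ^ 2) ^ (1 / 2 : ℝ)) ^ 2 := by gcongr
    _ = (∑' i, u i ^ 2) * ∑' i, v i ^ 2 := by rw [mul_pow, rpow_half_sq, rpow_half_sq]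

lemma ennreal_add_sq_le (a b : ℝ≥0∞) : (a + b) ^ 2 ≤ 2 * (a ^ 2 + b ^ 2) := by
  have convexity := ENNReal.rpow_add_le_mul_rpow_add_rpow a b one_le_two
  rwa [ENNReal.rpow_two, ENNReal.rpow_two, ENNReal.rpow_two, show (2 : ℝ) - 1 = 1 by norm_num,
    ENNReal.rpow_one] at convexity

section Convolution

variable {G : Type*} [AddGroup G]

lemma tsum_mul_conv_sq_le (w u v : G → ℝ≥0∞) :
    ∑' x, (w x * ∑' y, u (x - y) * v y) ^ 2
      ≤ (∑' x, w x ^ 2) * ((∑' x, u x ^ 2) * ∑' x, v x ^ 2) := by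
  have conv_sq_le (x : G) :
      (∑' y, u (x - y) * v y) ^ 2 ≤ (∑' y, u y ^ 2) * ∑' y, v y ^ 2 := by
    rw [← (Equiv.subLeft x).tsum_eq fun y => u y ^ 2]
    exact ennreal_tsum_mul_sq_le (fun y => u (x - y)) v
  rw [← ENNReal.tsum_mul_right]
  gcongr with x
  rw [mul_pow]
  gcongr
  exact conv_sq_le x

lemma tsum_conv_mul_sq_le (w u v : G → ℝ≥0∞) :
    ∑' x, (∑' y, u (x - y) * (w y * v y)) ^ 2
      ≤ (∑' x, w x ^ 2) * ((∑' x, u x ^ 2) * ∑' x, v x ^ 2) := by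
  have tsum_shift (y : G) : ∑' x, u (x - y) ^ 2 = ∑' x, u x ^ 2 :=
    (Equiv.subRight y).tsum_eq fun x => u x ^ 2
  calc ∑' x, (∑' y, u (x - y) * (w y * v y)) ^ 2
      = ∑' x, (∑' y, w y * (u (x - y) * v y)) ^ 2 := by simp only [mul_left_comm]
    _ ≤ ∑' x, (∑' y, w y ^ 2) * ∑' y, (u (x - y) * v y) ^ 2 := by
        gcongr with x
        exact ennreal_tsum_mul_sq_le w fun y => u (x - y) * v y
    _ = (∑' y, w y ^ 2) * ∑' y, (∑' x, u (x - y) ^ 2) * v y ^ 2 := by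
        rw [ENNReal.tsum_mul_left, ENNReal.tsum_comm]
        simp only [mul_pow, ENNReal.tsum_mul_right]
    _ = (∑' x, w x ^ 2) * ((∑' x, u x ^ 2) * ∑' x, v x ^ 2) := by
        simp only [tsum_shift, ENNReal.tsum_mul_left]

variable {w : G → ℝ≥0∞} {K : ℝ≥0∞}

lemma inv_weight_mul_conv_le (hw₀ : ∀ x, w x ≠ 0) (hw : ∀ x, w x ≠ ∞)
    (hK : ∀ x y, w (x - y) ≤ K * (w x + w y)) (u v : G → ℝ≥0∞) (x : G) :
    (w x)⁻¹ * ∑' y, w (x - y) * u (x - y) * v y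
      ≤ K * (∑' y, u (x - y) * v y + (w x)⁻¹ * ∑' y, u (x - y) * (w y * v y)) := by
  calc (w x)⁻¹ * ∑' y, w (x - y) * u (x - y) * v y
      ≤ (w x)⁻¹ * ∑' y, K * (w x + w y) * u (x - y) * v y := by
        gcongr with y
        exact hK x y
    _ = (w x)⁻¹ * (K * (w x * ∑' y, u (x - y) * v y + ∑' y, u (x - y) * (w y * v y))) := by
        simp_rw [← ENNReal.tsum_mul_left, ← ENNReal.tsum_add, ← ENNReal.tsum_mul_left]
        exact tsum_congr fun y => by ring
    _ = K * (∑' y, u (x - y) * v y + (w x)⁻¹ * ∑' y, u (x - y) * (w y * v y)) := by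
        rw [mul_left_comm, mul_add, ENNReal.inv_mul_cancel_left (hw₀ x) (hw x)]

lemma tsum_inv_weight_mul_conv_sq_le (hw₀ : ∀ x, w x ≠ 0) (hw : ∀ x, w x ≠ ∞)
    (hK : ∀ x y, w (x - y) ≤ K * (w x + w y)) (u v : G → ℝ≥0∞) :
    ∑' x, ((w x)⁻¹ * ∑' y, w (x - y) * u (x - y) * v y) ^ 2
      ≤ 4 * K ^ 2 * (∑' x, (w x)⁻¹ ^ 2) * ((∑' x, u x ^ 2) * ∑' x, (w x * v x) ^ 2) := by
  set B := (∑' x, (w x)⁻¹ ^ 2) * ((∑' x, u x ^ 2) * ∑' x, (w x * v x) ^ 2) with hB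
  have young : ∑' x, (∑' y, u (x - y) * v y) ^ 2 ≤ B := by
    refine le_trans (le_of_eq ?_) (tsum_conv_mul_sq_le (fun y => (w y)⁻¹) u fun y => w y * v y)
    simp only [ENNReal.inv_mul_cancel_left (hw₀ _) (hw _)]
  have weighted : ∑' x, ((w x)⁻¹ * ∑' y, u (x - y) * (w y * v y)) ^ 2 ≤ B :=
    tsum_mul_conv_sq_le (fun x => (w x)⁻¹) u fun y => w y * v y
  calc ∑' x, ((w x)⁻¹ * ∑' y, w (x - y) * u (x - y) * v y) ^ 2
      ≤ ∑' x, K ^ 2 * (2 * ((∑' y, u (x - y) * v y) ^ 2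
          + ((w x)⁻¹ * ∑' y, u (x - y) * (w y * v y)) ^ 2)) := by
        refine ENNReal.tsum_le_tsum fun x => ?_
        refine (pow_le_pow_left' (inv_weight_mul_conv_le hw₀ hw hK u v x) 2).trans ?_
        rw [mul_pow]
        exact mul_le_mul_right (ennreal_add_sq_le _ _) (K ^ 2)
    _ ≤ K ^ 2 * (2 * (B + B)) := by
        rw [ENNReal.tsum_mul_left, ENNReal.tsum_mul_left, ENNReal.tsum_add]
        gcongr
    _ = 4 * K ^ 2 * (∑' x, (w x)⁻¹ ^ 2) * ((∑' x, u x ^ 2) * ∑' x, (w x * v x) ^ 2) := by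
        rw [hB]
        ring

end Convolution

/-- The power `⟨k⟩^s = (1+k²)^{s/2}` of the Japanese bracket, valued in `ℝ≥0∞` so that it can weight
sums that are not known to converge. -/
def bracketPow (s : ℝ) (k : ℤ) : ℝ≥0∞ := ENNReal.ofReal ((1 + (k : ℝ) ^ 2) ^ (s / 2))

lemma bracketPow_ne_top (s : ℝ) (k : ℤ) : bracketPow s k ≠ ∞ := ENNReal.ofReal_ne_top

lemma bracketPow_ne_zero (s : ℝ) (k : ℤ) : bracketPow s k ≠ 0 := by
  rw [bracketPow, Ne, ENNReal.ofReal_eq_zero, not_le]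
  positivity

lemma bracketPow_neg (s : ℝ) (k : ℤ) : bracketPow (-s) k = (bracketPow s k)⁻¹ := by
  rw [bracketPow, bracketPow, neg_div, Real.rpow_neg (by positivity),
    ENNReal.ofReal_inv_of_pos (by positivity)]

lemma bracketPow_sq (s : ℝ) (k : ℤ) :
    bracketPow s k ^ 2 = ENNReal.ofReal ((1 + (k : ℝ) ^ 2) ^ s) := by
  rw [bracketPow, ← ENNReal.ofReal_pow (by positivity), ← Real.rpow_mul_natCast (by positivity)]
  norm_num

lemma one_add_sub_sq_rpow_le {r : ℝ} (hr : 0 ≤ r) (x y : ℝ) :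
    (1 + (x - y) ^ 2) ^ r ≤ 4 ^ r * ((1 + x ^ 2) ^ r + (1 + y ^ 2) ^ r) := by
  have le_four_mul_max : 1 + (x - y) ^ 2 ≤ 4 * max (1 + x ^ 2) (1 + y ^ 2) := by
    nlinarith [le_max_left (1 + x ^ 2) (1 + y ^ 2), le_max_right (1 + x ^ 2) (1 + y ^ 2),
      sq_nonneg (x + y)]
  calc (1 + (x - y) ^ 2) ^ r
      ≤ (4 * max (1 + x ^ 2) (1 + y ^ 2)) ^ r := by gcongr
    _ = 4 ^ r * max ((1 + x ^ 2) ^ r) ((1 + y ^ 2) ^ r) := by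
        rw [Real.mul_rpow (by norm_num) (by positivity),
          Real.rpow_max (by positivity) (by positivity) hr]
    _ ≤ 4 ^ r * ((1 + x ^ 2) ^ r + (1 + y ^ 2) ^ r) := by
        gcongr
        exact max_le_add_of_nonneg (by positivity) (by positivity)

lemma bracketPow_sub_le {s : ℝ} (hs : 0 ≤ s) (k j : ℤ) :
    bracketPow s (k - j)
      ≤ ENNReal.ofReal (4 ^ (s / 2)) * (bracketPow s k + bracketPow s j) := by
  simp only [bracketPow]
  rw [← ENNReal.ofReal_add (by positivity) (by positivity), ← ENNReal.ofReal_mul (by positivity)]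
  push_cast
  exact ENNReal.ofReal_le_ofReal (one_add_sub_sq_rpow_le (by positivity) _ _)

lemma summable_one_add_int_sq_rpow_neg {s : ℝ} (hs : 1 / 2 < s) :
    Summable fun k : ℤ => (1 + (k : ℝ) ^ 2) ^ (-s) := by
  have hsum : Summable fun k : ℤ => |(k : ℝ)| ^ (-(2 * s)) :=
    Real.summable_abs_int_rpow (by linarith)
  refine hsum.of_norm_bounded_eventually ?_
  -- The comparison fails at `k = 0`, where `|k| ^ (-(2 * s)) = 0`.
  filter_upwards [(Set.finite_singleton (0 : ℤ)).compl_mem_cofinite] with k hk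
  have hk₀ : (k : ℝ) ≠ 0 := Int.cast_ne_zero.mpr hk
  calc ‖(1 + (k : ℝ) ^ 2) ^ (-s)‖ = (1 + (k : ℝ) ^ 2) ^ (-s) :=
        Real.norm_of_nonneg (by positivity)
    _ ≤ (|(k : ℝ)| ^ 2) ^ (-s) := by
        rw [sq_abs]
        exact Real.rpow_le_rpow_of_nonpos (by positivity) (by linarith) (by linarith)
    _ = |(k : ℝ)| ^ (-(2 * s)) := by
        rw [← Real.rpow_natCast_mul (abs_nonneg _)]
        norm_num

lemma tsum_bracketPow_neg_sq_ne_top {s : ℝ} (hs : 1 / 2 < s) :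
    ∑' k, bracketPow (-s) k ^ 2 ≠ ∞ := by
  simp only [bracketPow_sq]
  exact (summable_one_add_int_sq_rpow_neg hs).tsum_ofReal_ne_top

lemma tsum_bracketPow_sq_ne_zero (s : ℝ) : ∑' k, bracketPow s k ^ 2 ≠ 0 := fun h =>
  pow_ne_zero 2 (bracketPow_ne_zero s 0) (ENNReal.tsum_eq_zero.mp h 0)

lemma enorm_Jpow (s : ℝ) (a : FSeq) (k : ℤ) : ‖Jpow s a k‖ₑ = bracketPow s k * ‖a k‖ₑ := by
  rw [Jpow, enorm_mul, bracketPow, ← ofReal_norm (E := ℂ), Complex.norm_real,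
    Real.norm_of_nonneg (by positivity)]

/-- The sum `∑_k ⟨k⟩^{2s} |â_k|²` defining the `H^s` norm, valued in `ℝ≥0∞` so that it is `∞`
rather than `0` when the series diverges. -/
def sobolevEnergy (s : ℝ) (a : FSeq) : ℝ≥0∞ := ∑' k, (bracketPow s k * ‖a k‖ₑ) ^ 2

lemma sobolevEnergy_zero (a : FSeq) : sobolevEnergy 0 a = ∑' k, ‖a k‖ₑ ^ 2 := by
  simp [sobolevEnergy, bracketPow]

lemma sobolevEnergy_zero_Jpow (s : ℝ) (a : FSeq) :
    sobolevEnergy 0 (Jpow s a) = sobolevEnergy s a := by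
  rw [sobolevEnergy_zero, sobolevEnergy]
  simp only [enorm_Jpow]

lemma sobolevEnergy_eq_tsum_ofReal (s : ℝ) (a : FSeq) :
    sobolevEnergy s a = ∑' k : ℤ, ENNReal.ofReal ((1 + (k : ℝ) ^ 2) ^ s * ‖a k‖ ^ 2) := by
  refine tsum_congr fun k => ?_
  rw [mul_pow, bracketPow_sq, ENNReal.ofReal_mul (by positivity),
    ENNReal.ofReal_pow (norm_nonneg _), ofReal_norm]

lemma inHs_iff_sobolevEnergy_ne_top {s : ℝ} {a : FSeq} : InHs s a ↔ sobolevEnergy s a ≠ ∞ := by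
  rw [sobolevEnergy_eq_tsum_ofReal]
  refine ⟨fun h => h.tsum_ofReal_ne_top, fun h => (ENNReal.summable_toReal h).congr fun k => ?_⟩
  exact ENNReal.toReal_ofReal (by positivity)

lemma hnorm_eq_sqrt_sobolevEnergy (s : ℝ) (a : FSeq) :
    hnorm s a = √(2 * Real.pi * (sobolevEnergy s a).toReal) := by
  rw [hnorm, sobolevEnergy_eq_tsum_ofReal, ENNReal.tsum_toReal_eq fun _ => ENNReal.ofReal_ne_top]
  congr 2
  refine tsum_congr fun k => ?_
  exact (ENNReal.toReal_ofReal (by positivity)).symm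

lemma InHs.mono {s t : ℝ} {a : FSeq} (hst : s ≤ t) (h : InHs t a) : InHs s a := by
  refine Summable.of_nonneg_of_le (fun k => by positivity) (fun k => ?_) h
  gcongr
  exact le_add_of_nonneg_right (sq_nonneg _)

lemma inHs_and_hnorm_le_of_sobolevEnergy_le {r s t : ℝ} {a b c : FSeq} {M : ℝ≥0∞} (hM : M ≠ ∞)
    (ha : InHs s a) (hb : InHs t b)
    (hle : sobolevEnergy r c ≤ M * (sobolevEnergy s a * sobolevEnergy t b)) :
    InHs r c ∧ hnorm r c ≤ √(M.toReal / (2 * Real.pi)) * (hnorm s a * hnorm t b) := by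
  have bound_ne_top : M * (sobolevEnergy s a * sobolevEnergy t b) ≠ ∞ :=
    ENNReal.mul_ne_top hM (ENNReal.mul_ne_top (inHs_iff_sobolevEnergy_ne_top.mp ha)
      (inHs_iff_sobolevEnergy_ne_top.mp hb))
  refine ⟨inHs_iff_sobolevEnergy_ne_top.mpr (ne_top_of_le_ne_top bound_ne_top hle), ?_⟩
  have hreal := ENNReal.toReal_mono bound_ne_top hle
  simp only [ENNReal.toReal_mul] at hreal
  simp only [hnorm_eq_sqrt_sobolevEnergy]
  rw [← Real.sqrt_mul (by positivity), ← Real.sqrt_mul (by positivity)]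
  refine Real.sqrt_le_sqrt ((mul_le_mul_of_nonneg_left hreal (by positivity)).trans_eq ?_)
  field_simp

lemma enorm_conv_le (a b : FSeq) (k : ℤ) : ‖conv a b k‖ₑ ≤ ∑' j, ‖a (k - j)‖ₑ * ‖b j‖ₑ := by
  simpa only [conv, enorm_mul] using enorm_tsum_le_tsum_enorm (f := fun j => a (k - j) * b j)

lemma sobolevEnergy_conv_le (s : ℝ) (a b : FSeq) :
    sobolevEnergy s (conv a b)
      ≤ (∑' k, bracketPow s k ^ 2) * (sobolevEnergy 0 a * sobolevEnergy 0 b) := by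
  calc sobolevEnergy s (conv a b)
      ≤ ∑' k, (bracketPow s k * ∑' j, ‖a (k - j)‖ₑ * ‖b j‖ₑ) ^ 2 := by
        rw [sobolevEnergy]
        gcongr with k
        exact enorm_conv_le a b k
    _ ≤ (∑' k, bracketPow s k ^ 2) * (sobolevEnergy 0 a * sobolevEnergy 0 b) := by
        rw [sobolevEnergy_zero, sobolevEnergy_zero]
        exact tsum_mul_conv_sq_le (bracketPow s) (‖a ·‖ₑ) (‖b ·‖ₑ)

lemma sobolevEnergy_neg_conv_Jpow_le {s : ℝ} (hs : 0 ≤ s) (f g : FSeq) :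
    sobolevEnergy (-s) (conv (Jpow s f) g)
      ≤ 4 * ENNReal.ofReal (4 ^ (s / 2)) ^ 2 * (∑' k, bracketPow (-s) k ^ 2)
        * (sobolevEnergy 0 f * sobolevEnergy s g) := by
  calc sobolevEnergy (-s) (conv (Jpow s f) g)
      ≤ ∑' k, ((bracketPow s k)⁻¹
          * ∑' j, bracketPow s (k - j) * ‖f (k - j)‖ₑ * ‖g j‖ₑ) ^ 2 := by
        simp only [sobolevEnergy, bracketPow_neg, ← enorm_Jpow]
        gcongr with k
        exact enorm_conv_le (Jpow s f) g k
    _ ≤ 4 * ENNReal.ofReal (4 ^ (s / 2)) ^ 2 * (∑' k, bracketPow (-s) k ^ 2)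
        * (sobolevEnergy 0 f * sobolevEnergy s g) := by
        simp only [bracketPow_neg, sobolevEnergy_zero]
        exact tsum_inv_weight_mul_conv_sq_le (bracketPow_ne_zero s) (bracketPow_ne_top s)
          (bracketPow_sub_le hs) (‖f ·‖ₑ) (‖g ·‖ₑ)

theorem Jinv_product_L2_general {s : ℝ} (hs : 1 / 2 < s) :
    ∃ C : ℝ, 0 < C ∧ ∀ f g : FSeq,
      (InHs 0 f → InHs s g →
        InHs 0 (Jpow (-s) (conv (Jpow s f) g)) ∧
          hnorm 0 (Jpow (-s) (conv (Jpow s f) g)) ≤ C * (hnorm 0 f * hnorm s g)) ∧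
      (InHs s f → InHs 0 g →
        InHs 0 (Jpow (-s) (conv (Jpow s f) g)) ∧
          hnorm 0 (Jpow (-s) (conv (Jpow s f) g)) ≤ C * (hnorm 0 g * hnorm s f)) := by
  set S := ∑' k, bracketPow (-s) k ^ 2
  set M := 4 * ENNReal.ofReal (4 ^ (s / 2)) ^ 2 * S
  have hM : M ≠ ∞ := by finiteness [tsum_bracketPow_neg_sq_ne_top hs]
  have hSM : S ≤ M := by
    have one_le_rpow : (1 : ℝ) ≤ 4 ^ (s / 2) := Real.one_le_rpow (by norm_num) (by linarith)
    refine le_mul_of_one_le_left' (one_le_mul (by norm_num) (one_le_pow₀ ?_))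
    exact ENNReal.one_le_ofReal.mpr one_le_rpow
  have hM_pos : 0 < M.toReal :=
    ENNReal.toReal_pos (ne_bot_of_le_ne_bot (tsum_bracketPow_sq_ne_zero (-s)) hSM) hM
  refine ⟨√(M.toReal / (2 * Real.pi)), by positivity,
    fun f g => ⟨fun hf hg => ?_, fun hf hg => ?_⟩⟩
  · refine inHs_and_hnorm_le_of_sobolevEnergy_le hM hf hg ?_
    rw [sobolevEnergy_zero_Jpow]
    exact sobolevEnergy_neg_conv_Jpow_le (by linarith) f g
  · refine inHs_and_hnorm_le_of_sobolevEnergy_le hM hg hf ?_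
    rw [sobolevEnergy_zero_Jpow, mul_comm (sobolevEnergy 0 g), ← sobolevEnergy_zero_Jpow s f]
    exact (sobolevEnergy_conv_le (-s) (Jpow s f) g).trans (by gcongr)

theorem Jinv_product_L2 :
    ∃ C : ℝ, 0 < C ∧ ∀ f g : FSeq, InHs 1 f → InHs 1 g →
      hnorm 0 (Jpow (-1) (conv (Jpow 1 f) g)) ≤
        C * min (hnorm 0 f * hnorm 1 g) (hnorm 0 g * hnorm 1 f) := by
  obtain ⟨C, hC, bounds⟩ := Jinv_product_L2_general one_half_lt_one
  refine ⟨C, hC, fun f g hf hg => ?_⟩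
  rw [mul_min_of_nonneg _ _ hC.le]
  exact le_min ((bounds f g).1 (hf.mono zero_le_one) hg).2
    ((bounds f g).2 hf (hg.mono zero_le_one)).2

end
end

section
/- Let s>1/2. For all f,g∈H^s(𝕋) and h∈L²(𝕋): ∑_{k≠0} ∑_{k₁+k₂=k, |k₁|>10|k|} |k|^{s−1}|k₁| |f̂_{k₁}| |ĝ_{k₂}| |ĥ_k| ≤ C‖f‖_{H^s}‖g‖_{H^s}‖h‖_{L²}, where the constant C depends only on s. -/
/-!
Let `r > 1`; the theorem is the case `r = 10`. In the region `|k₁| > r|k|` the frequency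
`k₂ = k - k₁` satisfies `|k₂| ≥ (1 - 1/r)|k₁|`, so `|k₁|^(2s)` is at most a constant times
`|k₁|^s |k₂|^s`. Since `2s - 1 ≥ 0`, also `|k|^(2s-1) |k₁| ≤ |k₁|^(2s)`. Hence the multiplier
`|k|^(s-1) |k₁|` is at most a constant times `|k|^(-s) |k₁|^s |k₂|^s`, and the sum is controlled by
`∑_k |k|^(-s) |ĥ_k| (F * G)_k`, where `F_k = ⟨k⟩^s |f̂_k|` and `G_k = ⟨k⟩^s |ĝ_k|`. The convolution
is bounded by `‖F‖_{ℓ²} ‖G‖_{ℓ²}`, and `∑ |k|^(-s) |ĥ_k|` is finite by Cauchy–Schwarz because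
`∑ |k|^(-2s) < ∞` for `s > 1/2`.
-/

noncomputable section

open Complex MeasureTheory
open scoped BigOperators

section SquareSummable

variable {ι : Type*} {u v : ι → ℝ}

theorem summable_mul_of_summable_sq_s5 (hu : Summable fun i => u i ^ 2)
    (hv : Summable fun i => v i ^ 2) : Summable fun i => u i * v i :=
  (hu.add hv).of_norm_bounded fun i => by
    rw [Real.norm_eq_abs, abs_le]
    constructor <;> nlinarith [sq_nonneg (u i + v i), sq_nonneg (u i - v i)]

theorem tsum_mul_le_sqrt_mul_sqrt (hu : Summable fun i => u i ^ 2)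
    (hv : Summable fun i => v i ^ 2) :
    ∑' i, u i * v i ≤ √(∑' i, u i ^ 2) * √(∑' i, v i ^ 2) :=
  (summable_mul_of_summable_sq_s5 hu hv).tsum_le_of_sum_le fun t =>
    (Real.sum_mul_le_sqrt_mul_sqrt t u v).trans <| by
      gcongr
      · exact hu.sum_le_tsum t fun i _ => sq_nonneg (u i)
      · exact hv.sum_le_tsum t fun i _ => sq_nonneg (v i)

end SquareSummable

section Convolution

variable {G : Type*} [AddGroup G] {p u v : G → ℝ}

theorem summable_mul_sub_of_summable_sq (hu : Summable fun m => u m ^ 2)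
    (hv : Summable fun m => v m ^ 2) (k : G) : Summable fun m => u m * v (k - m) :=
  summable_mul_of_summable_sq_s5 hu ((Equiv.subLeft k).summable_iff.mpr hv)

theorem tsum_mul_sub_le_sqrt_mul_sqrt (hu : Summable fun m => u m ^ 2)
    (hv : Summable fun m => v m ^ 2) (k : G) :
    ∑' m, u m * v (k - m) ≤ √(∑' m, u m ^ 2) * √(∑' m, v m ^ 2) := by
  rw [← (Equiv.subLeft k).tsum_eq fun m => v m ^ 2]
  exact tsum_mul_le_sqrt_mul_sqrt hu ((Equiv.subLeft k).summable_iff.mpr hv)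

theorem summable_mul_convolution (hp : Summable p) (hp₀ : 0 ≤ p)
    (hu : Summable fun m => u m ^ 2) (hu₀ : 0 ≤ u)
    (hv : Summable fun m => v m ^ 2) (hv₀ : 0 ≤ v) :
    Summable fun x : G × G => p x.1 * (u x.2 * v (x.1 - x.2)) := by
  have huv₀ (k m : G) : 0 ≤ u m * v (k - m) := mul_nonneg (hu₀ m) (hv₀ (k - m))
  refine (summable_prod_of_nonneg fun x => mul_nonneg (hp₀ x.1) (huv₀ x.1 x.2)).mpr
    ⟨fun k => (summable_mul_sub_of_summable_sq hu hv k).mul_left (p k), ?_⟩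
  simp only [tsum_mul_left]
  exact (hp.mul_right (√(∑' m, u m ^ 2) * √(∑' m, v m ^ 2))).of_nonneg_of_le
    (fun k => mul_nonneg (hp₀ k) (tsum_nonneg (huv₀ k)))
    fun k => mul_le_mul_of_nonneg_left (tsum_mul_sub_le_sqrt_mul_sqrt hu hv k) (hp₀ k)

theorem tsum_mul_convolution_le (hp : Summable p) (hp₀ : 0 ≤ p)
    (hu : Summable fun m => u m ^ 2) (hu₀ : 0 ≤ u)
    (hv : Summable fun m => v m ^ 2) (hv₀ : 0 ≤ v) :
    ∑' x : G × G, p x.1 * (u x.2 * v (x.1 - x.2)) ≤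
      (∑' k, p k) * (√(∑' m, u m ^ 2) * √(∑' m, v m ^ 2)) := by
  have hsum := summable_mul_convolution hp hp₀ hu hu₀ hv hv₀
  rw [hsum.tsum_prod, ← tsum_mul_right]
  refine hsum.prod.tsum_le_tsum (fun k => ?_) (hp.mul_right _)
  calc ∑' m, p k * (u m * v (k - m)) = p k * ∑' m, u m * v (k - m) := tsum_mul_left
    _ ≤ p k * (√(∑' m, u m ^ 2) * √(∑' m, v m ^ 2)) :=
      mul_le_mul_of_nonneg_left (tsum_mul_sub_le_sqrt_mul_sqrt hu hv k) (hp₀ k)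

end Convolution

section PowerWeight

variable {s : ℝ}

theorem sq_abs_rpow (s x : ℝ) : (|x| ^ s) ^ 2 = |x| ^ (2 * s) := by
  rw [← Real.rpow_mul_natCast (abs_nonneg x), Nat.cast_ofNat, mul_comm]

theorem abs_rpow_le_one_add_sq_rpow (hs : 0 ≤ s) (x : ℝ) : |x| ^ s ≤ (1 + x ^ 2) ^ (s / 2) := by
  calc |x| ^ s = (x ^ 2) ^ (s / 2) := by
        rw [← sq_abs, ← Real.rpow_natCast_mul (abs_nonneg x), Nat.cast_ofNat,
          mul_div_cancel₀ s two_ne_zero]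
    _ ≤ (1 + x ^ 2) ^ (s / 2) := by gcongr; linarith

-- The term `k = 0` contributes nothing, as `0 ^ (-s) = 0` for real powers with `s ≠ 0`.
theorem summable_sq_abs_int_rpow_neg (hs : 1 / 2 < s) :
    Summable fun k : ℤ => (|(k : ℝ)| ^ (-s)) ^ 2 := by
  simp only [sq_abs_rpow, mul_neg]
  exact Real.summable_abs_int_rpow (by linarith)

theorem tsum_sq_abs_int_rpow_neg_pos (hs : 1 / 2 < s) :
    0 < ∑' k : ℤ, (|(k : ℝ)| ^ (-s)) ^ 2 :=
  (summable_sq_abs_int_rpow_neg hs).tsum_pos (fun _ => by positivity) 1 (by simp)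

theorem abs_le_mul_abs_sub_of_mul_abs_le {r x y : ℝ} (hr : 1 < r) (hxy : r * |x| ≤ |y|) :
    |y| ≤ r / (r - 1) * |x - y| := by
  have hr₁ : 0 < r - 1 := sub_pos.mpr hr
  have htriangle : |y| - |x| ≤ |x - y| := abs_sub_comm x y ▸ abs_sub_abs_le_abs_sub y x
  rw [div_mul_eq_mul_div, le_div_iff₀ hr₁]
  nlinarith

theorem abs_rpow_sub_one_mul_abs_le (hs : 1 / 2 ≤ s) {r x y : ℝ} (hr : 1 < r) (hx : x ≠ 0)
    (hxy : r * |x| ≤ |y|) :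
    |x| ^ (s - 1) * |y| ≤ (r / (r - 1)) ^ s * (|x| ^ (-s) * (|y| ^ s * |x - y| ^ s)) := by
  have hratio : 0 ≤ r / (r - 1) := div_nonneg (by linarith) (by linarith)
  have hx₀ : 0 < |x| := abs_pos.mpr hx
  have hle : |x| ≤ |y| := (le_mul_of_one_le_left hx₀.le hr.le).trans hxy
  have hy₀ : 0 < |y| := hx₀.trans_le hle
  calc |x| ^ (s - 1) * |y| = |x| ^ (-s) * (|x| ^ (2 * s - 1) * |y|) := by
        rw [← mul_assoc, ← Real.rpow_add hx₀]
        ring_nf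
    _ ≤ |x| ^ (-s) * (|y| ^ (2 * s - 1) * |y|) := by
        gcongr
        linarith
    _ = |x| ^ (-s) * (|y| ^ s * |y| ^ s) := by
        rw [← Real.rpow_add_one hy₀.ne', ← Real.rpow_add hy₀]
        ring_nf
    _ ≤ |x| ^ (-s) * (|y| ^ s * (r / (r - 1) * |x - y|) ^ s) := by
        gcongr
        exact abs_le_mul_abs_sub_of_mul_abs_le hr hxy
    _ = (r / (r - 1)) ^ s * (|x| ^ (-s) * (|y| ^ s * |x - y| ^ s)) := by
        rw [Real.mul_rpow hratio (abs_nonneg _)]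
        ring

end PowerWeight

/-- The modulus `⟨k⟩^s |f̂_k|` of the `k`-th Fourier coefficient of the Bessel potential
`(1 - ∂ₓ²)^(s/2) f`, where `⟨k⟩ = (1 + k²)^(1/2)`. Its `ℓ²` norm is `(2π)^(-1/2) ‖f‖_{H^s}`. -/
def besselCoeff (s : ℝ) (a : FSeq) (k : ℤ) : ℝ :=
  (1 + (k : ℝ) ^ 2) ^ (s / 2) * ‖a k‖

section BesselCoeff

variable (s : ℝ) (a : FSeq)

theorem besselCoeff_nonneg : 0 ≤ besselCoeff s a := fun k => by
  unfold besselCoeff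
  positivity

theorem besselCoeff_zero (k : ℤ) : besselCoeff 0 a k = ‖a k‖ := by
  simp [besselCoeff]

theorem sq_besselCoeff (k : ℤ) :
    besselCoeff s a k ^ 2 = (1 + (k : ℝ) ^ 2) ^ s * ‖a k‖ ^ 2 := by
  rw [besselCoeff, mul_pow, ← Real.rpow_mul_natCast (by positivity), Nat.cast_ofNat,
    div_mul_cancel₀ s two_ne_zero]

theorem hnorm_nonneg : 0 ≤ hnorm s a := Real.sqrt_nonneg _

theorem sqrt_tsum_sq_besselCoeff_le_hnorm : √(∑' k, besselCoeff s a k ^ 2) ≤ hnorm s a := by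
  simp only [hnorm, ← sq_besselCoeff]
  exact Real.sqrt_le_sqrt <| le_mul_of_one_le_left (tsum_nonneg fun k => sq_nonneg _)
    (by linarith [Real.pi_gt_three])

variable {s a}

theorem InHs.summable_sq_besselCoeff (ha : InHs s a) :
    Summable fun k => besselCoeff s a k ^ 2 := by
  simp only [sq_besselCoeff]
  exact ha

theorem abs_rpow_mul_norm_le_besselCoeff (hs : 0 ≤ s) (k : ℤ) :
    |(k : ℝ)| ^ s * ‖a k‖ ≤ besselCoeff s a k :=
  mul_le_mul_of_nonneg_right (abs_rpow_le_one_add_sq_rpow hs k) (norm_nonneg _)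

theorem abs_int_rpow_neg_mul_besselCoeff_nonneg (t : ℝ) :
    0 ≤ fun k : ℤ => |(k : ℝ)| ^ (-t) * besselCoeff s a k := fun k =>
  mul_nonneg (by positivity) (besselCoeff_nonneg s a k)

theorem InHs.summable_abs_int_rpow_neg_mul_besselCoeff (ha : InHs s a) {t : ℝ}
    (ht : 1 / 2 < t) : Summable fun k : ℤ => |(k : ℝ)| ^ (-t) * besselCoeff s a k :=
  summable_mul_of_summable_sq_s5 (summable_sq_abs_int_rpow_neg ht) ha.summable_sq_besselCoeff

theorem InHs.tsum_abs_int_rpow_neg_mul_besselCoeff_le (ha : InHs s a) {t : ℝ}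
    (ht : 1 / 2 < t) :
    ∑' k : ℤ, |(k : ℝ)| ^ (-t) * besselCoeff s a k ≤
      √(∑' k : ℤ, (|(k : ℝ)| ^ (-t)) ^ 2) * hnorm s a :=
  (tsum_mul_le_sqrt_mul_sqrt (summable_sq_abs_int_rpow_neg ht) ha.summable_sq_besselCoeff).trans
    (mul_le_mul_of_nonneg_left (sqrt_tsum_sq_besselCoeff_le_hnorm s a) (Real.sqrt_nonneg _))

section Convolution

variable {b : FSeq} {p : ℤ → ℝ}

theorem InHs.summable_mul_besselCoeff_convolution {t : ℝ} (ha : InHs s a) (hb : InHs t b)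
    (hp : Summable p) (hp₀ : 0 ≤ p) :
    Summable fun x : ℤ × ℤ => p x.1 * (besselCoeff s a x.2 * besselCoeff t b (x.1 - x.2)) :=
  summable_mul_convolution hp hp₀ ha.summable_sq_besselCoeff (besselCoeff_nonneg s a)
    hb.summable_sq_besselCoeff (besselCoeff_nonneg t b)

theorem InHs.tsum_mul_besselCoeff_convolution_le {t : ℝ} (ha : InHs s a) (hb : InHs t b)
    (hp : Summable p) (hp₀ : 0 ≤ p) :
    ∑' x : ℤ × ℤ, p x.1 * (besselCoeff s a x.2 * besselCoeff t b (x.1 - x.2)) ≤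
      (∑' k, p k) * (hnorm s a * hnorm t b) :=
  (tsum_mul_convolution_le hp hp₀ ha.summable_sq_besselCoeff (besselCoeff_nonneg s a)
    hb.summable_sq_besselCoeff (besselCoeff_nonneg t b)).trans <|
    mul_le_mul_of_nonneg_left
      (mul_le_mul (sqrt_tsum_sq_besselCoeff_le_hnorm s a) (sqrt_tsum_sq_besselCoeff_le_hnorm t b)
        (Real.sqrt_nonneg _) (hnorm_nonneg s a))
      (tsum_nonneg hp₀)

end Convolution

end BesselCoeff

/-- The summand at `(k, k₁)` of the trilinear sum, with `k₂ = k - k₁`, restricted to the region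
`k ≠ 0`, `|k₁| > r|k|`. -/
def highFreqTerm (s r : ℝ) (f g h : FSeq) (k k₁ : ℤ) : ℝ :=
  if k ≠ 0 ∧ r * |(k : ℝ)| < |(k₁ : ℝ)| then
    |(k : ℝ)| ^ (s - 1) * |(k₁ : ℝ)| * ‖f k₁‖ * ‖g (k - k₁)‖ * ‖h k‖ else 0

section HighFreqTerm

variable {s r : ℝ} (f g h : FSeq)

theorem highFreqTerm_nonneg (k k₁ : ℤ) : 0 ≤ highFreqTerm s r f g h k k₁ := by
  unfold highFreqTerm
  positivity

theorem highFreqTerm_intCast (n k k₁ : ℤ) :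
    highFreqTerm s n f g h k k₁ =
      if k ≠ 0 ∧ n * |k| < |k₁| then
        |(k : ℝ)| ^ (s - 1) * |(k₁ : ℝ)| * ‖f k₁‖ * ‖g (k - k₁)‖ * ‖h k‖ else 0 := by
  simp only [highFreqTerm]
  norm_cast

theorem highFreqTerm_le (hs : 1 / 2 ≤ s) (hr : 1 < r) (k k₁ : ℤ) :
    highFreqTerm s r f g h k k₁ ≤ (r / (r - 1)) ^ s *
      (|(k : ℝ)| ^ (-s) * besselCoeff 0 h k *
        (besselCoeff s f k₁ * besselCoeff s g (k - k₁))) := by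
  have hs₀ : 0 ≤ s := by linarith
  have hconst : 0 ≤ (r / (r - 1)) ^ s :=
    Real.rpow_nonneg (div_nonneg (by linarith) (by linarith)) s
  have hF := besselCoeff_nonneg s f k₁
  have hG := besselCoeff_nonneg s g (k - k₁)
  have hH := besselCoeff_nonneg 0 h k
  rw [Pi.zero_apply] at hF hG hH
  unfold highFreqTerm
  split_ifs with hregion
  · obtain ⟨hk, hlt⟩ := hregion
    calc |(k : ℝ)| ^ (s - 1) * |(k₁ : ℝ)| * ‖f k₁‖ * ‖g (k - k₁)‖ * ‖h k‖
        ≤ (r / (r - 1)) ^ s * (|(k : ℝ)| ^ (-s) * (|(k₁ : ℝ)| ^ s * |(k : ℝ) - k₁| ^ s)) *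
            ‖f k₁‖ * ‖g (k - k₁)‖ * ‖h k‖ := by
          gcongr ?_ * ‖f k₁‖ * ‖g (k - k₁)‖ * ‖h k‖
          exact abs_rpow_sub_one_mul_abs_le hs hr (Int.cast_ne_zero.mpr hk) hlt.le
      _ = (r / (r - 1)) ^ s * (|(k : ℝ)| ^ (-s) * besselCoeff 0 h k *
            ((|(k₁ : ℝ)| ^ s * ‖f k₁‖) * (|((k - k₁ : ℤ) : ℝ)| ^ s * ‖g (k - k₁)‖))) := by
          rw [besselCoeff_zero, Int.cast_sub]
          ring
      _ ≤ _ := by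
          gcongr
          · exact abs_rpow_mul_norm_le_besselCoeff hs₀ k₁
          · exact abs_rpow_mul_norm_le_besselCoeff hs₀ (k - k₁)
  · exact mul_nonneg hconst (by positivity)

variable {f g h}

theorem summable_highFreqTerm (hs : 1 / 2 < s) (hr : 1 < r) (hf : InHs s f) (hg : InHs s g)
    (hh : InHs 0 h) : Summable fun x : ℤ × ℤ => highFreqTerm s r f g h x.1 x.2 :=
  ((hf.summable_mul_besselCoeff_convolution hg (hh.summable_abs_int_rpow_neg_mul_besselCoeff hs)
    (abs_int_rpow_neg_mul_besselCoeff_nonneg s)).mul_left ((r / (r - 1)) ^ s)).of_nonneg_of_le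
    (fun x => highFreqTerm_nonneg f g h x.1 x.2) fun x => highFreqTerm_le f g h hs.le hr x.1 x.2

theorem tsum_highFreqTerm_le (hs : 1 / 2 < s) (hr : 1 < r) (hf : InHs s f) (hg : InHs s g)
    (hh : InHs 0 h) :
    ∑' k : ℤ, ∑' k₁ : ℤ, highFreqTerm s r f g h k k₁ ≤
      (r / (r - 1)) ^ s * √(∑' k : ℤ, (|(k : ℝ)| ^ (-s)) ^ 2) *
        hnorm s f * hnorm s g * hnorm 0 h := by
  have hconst : 0 ≤ (r / (r - 1)) ^ s :=
    Real.rpow_nonneg (div_nonneg (by linarith) (by linarith)) s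
  have hsum := summable_highFreqTerm hs hr hf hg hh
  have hp := hh.summable_abs_int_rpow_neg_mul_besselCoeff hs
  have hp₀ := abs_int_rpow_neg_mul_besselCoeff_nonneg (s := 0) (a := h) s
  calc ∑' k : ℤ, ∑' k₁ : ℤ, highFreqTerm s r f g h k k₁
      = ∑' x : ℤ × ℤ, highFreqTerm s r f g h x.1 x.2 := hsum.tsum_prod.symm
    _ ≤ ∑' x : ℤ × ℤ, (r / (r - 1)) ^ s * (|(x.1 : ℝ)| ^ (-s) * besselCoeff 0 h x.1 *
          (besselCoeff s f x.2 * besselCoeff s g (x.1 - x.2))) :=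
        hsum.tsum_le_tsum (fun x => highFreqTerm_le f g h hs.le hr x.1 x.2)
          ((hf.summable_mul_besselCoeff_convolution hg hp hp₀).mul_left _)
    _ ≤ (r / (r - 1)) ^ s * ((∑' k : ℤ, |(k : ℝ)| ^ (-s) * besselCoeff 0 h k) *
          (hnorm s f * hnorm s g)) := by
        rw [tsum_mul_left]
        exact mul_le_mul_of_nonneg_left
          (hf.tsum_mul_besselCoeff_convolution_le hg hp hp₀) hconst
    _ ≤ (r / (r - 1)) ^ s * (√(∑' k : ℤ, (|(k : ℝ)| ^ (-s)) ^ 2) * hnorm 0 h *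
          (hnorm s f * hnorm s g)) :=
        mul_le_mul_of_nonneg_left
          (mul_le_mul_of_nonneg_right (hh.tsum_abs_int_rpow_neg_mul_besselCoeff_le hs)
            (mul_nonneg (hnorm_nonneg s f) (hnorm_nonneg s g))) hconst
    _ = _ := by ring

end HighFreqTerm

theorem high_freq_sum_Hs_general (s : ℝ) (hs : 1 / 2 < s) (r : ℝ) (hr : 1 < r) :
    ∃ C : ℝ, 0 < C ∧ ∀ f g h : FSeq, InHs s f → InHs s g → InHs 0 h →
      (Summable fun x : ℤ × ℤ => highFreqTerm s r f g h x.1 x.2) ∧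
      ∑' k : ℤ, ∑' k₁ : ℤ, highFreqTerm s r f g h k k₁
        ≤ C * hnorm s f * hnorm s g * hnorm 0 h := by
  have hratio : 0 < r / (r - 1) := div_pos (by linarith) (by linarith)
  exact ⟨(r / (r - 1)) ^ s * √(∑' k : ℤ, (|(k : ℝ)| ^ (-s)) ^ 2),
    mul_pos (Real.rpow_pos_of_pos hratio s) (Real.sqrt_pos.mpr (tsum_sq_abs_int_rpow_neg_pos hs)),
    fun _ _ _ hf hg hh =>
      ⟨summable_highFreqTerm hs hr hf hg hh, tsum_highFreqTerm_le hs hr hf hg hh⟩⟩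

theorem high_freq_sum_Hs (s : ℝ) (hs : 1 / 2 < s) :
    ∃ C : ℝ, 0 < C ∧ ∀ f g h : FSeq, InHs s f → InHs s g → InHs 0 h →
      ∑' k : ℤ, ∑' k₁ : ℤ,
        (if k ≠ 0 ∧ 10 * |k| < |k₁| then
          (|(k : ℝ)|) ^ (s - 1) * |(k₁ : ℝ)| * ‖f k₁‖ * ‖g (k - k₁)‖ * ‖h k‖ else 0)
      ≤ C * hnorm s f * hnorm s g * hnorm 0 h := by
  obtain ⟨C, hC, hbound⟩ := high_freq_sum_Hs_general s hs (10 : ℤ) (by norm_num)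
  exact ⟨C, hC, fun f g h hf hg hh => by
    simpa only [highFreqTerm_intCast] using (hbound f g h hf hg hh).2⟩

end
end

section
/- Let N≥10 be an integer, s∈[0,1], j∈{1,2,3}, and let v∈H¹(𝕋). Suppose f∈L²(𝕋) satisfies |f̂_k| ≤ ∑_{k₁+k₂+k₃=k, |k₁+k₂|>N} |k|^{−1}|k_j| |v̂_{k₁}||v̂_{k₂}||v̂_{k₃}| for every k with 0<|k|≤N, and f̂_k=0 for k=0 and for |k|>N. Then ‖f‖_{H^s} ≤ C N^{−1+s} ‖v‖_{H¹}³, where C is an absolute constant. -/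
/-!
Write `V = |v̂|`, `D = ⟨·⟩ V` and `k₃ = k - k₁ - k₂`. On the region `|k₁ + k₂| > N` both
`N ≤ |k₁| + |k₂|` and `N ≤ |k| + |k₃|` hold, so for each of the three values of `j`
`N |k|⁻¹ |k_j| ≤ (|k₁| + |k₂|) (1 + |k|⁻¹ |k₃|)`.
Hence, by the symmetries of the convolution,
`N |f̂_k| ≤ 2 (V ⋆ V ⋆ D)(k) + 2 |k|⁻¹ (D ⋆ V ⋆ D)(k)`.
By Young's inequality the first convolution is at most `‖V‖₁² ‖D‖₂` in `ℓ²`, and the second is at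
most `‖V‖₁ ‖D‖₂²` in `ℓ^∞`, where it meets the square summable factor `|k|⁻¹`. Cauchy–Schwarz
gives `‖V‖₁ ≤ ‖⟨·⟩⁻¹‖₂ ‖D‖₂`, so that `N ‖f‖_{L²} ≲ ‖v‖_{H¹}³`. Passing to `H^s` costs a factor
`N^s`, as `f̂` is supported in `|k| ≤ N`.
-/

noncomputable section

open Complex MeasureTheory
open scoped BigOperators

open scoped ENNReal

section Young

lemma lintegral_mul_rpow_le {α : Type*} {mα : MeasurableSpace α} {μ : Measure α} {f g : α → ℝ≥0∞}
    {p : ℝ} (hp : 1 ≤ p) (hf : AEMeasurable f μ) (hg : AEMeasurable g μ) :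
    (∫⁻ x, f x * g x ∂μ) ^ p ≤ (∫⁻ x, f x ∂μ) ^ (p - 1) * ∫⁻ x, f x * g x ^ p ∂μ := by
  have hp0 : 0 < p := one_pos.trans_le hp
  have hν : ∀ h : α → ℝ≥0∞, AEMeasurable h μ →
      ∫⁻ x, h x ∂μ.withDensity f = ∫⁻ x, f x * h x ∂μ := fun h hh =>
    lintegral_withDensity_eq_lintegral_mul₀ hf hh
  have holder := eLpNorm'_le_eLpNorm'_mul_rpow_measure_univ one_pos hp
    (hg.aestronglyMeasurable.mono_ac (withDensity_absolutelyContinuous μ f))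
  simp only [eLpNorm', enorm_eq_self, ENNReal.rpow_one, one_div, inv_one, hν g hg,
    hν _ (hg.pow_const p), withDensity_apply _ MeasurableSet.univ, Measure.restrict_univ] at holder
  calc (∫⁻ x, f x * g x ∂μ) ^ p
      ≤ ((∫⁻ x, f x * g x ^ p ∂μ) ^ p⁻¹ * (∫⁻ x, f x ∂μ) ^ (1 - p⁻¹)) ^ p := by gcongr
    _ = (∫⁻ x, f x ∂μ) ^ (p - 1) * ∫⁻ x, f x * g x ^ p ∂μ := by
        rw [ENNReal.mul_rpow_of_nonneg _ _ hp0.le, ← ENNReal.rpow_mul, ← ENNReal.rpow_mul,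
          inv_mul_cancel₀ hp0.ne', ENNReal.rpow_one, sub_mul, inv_mul_cancel₀ hp0.ne', one_mul,
          mul_comm]

lemma lintegral_mul_le_eLpNorm_mul_eLpNorm {α : Type*} {mα : MeasurableSpace α} {μ : Measure α}
    {f g : α → ℝ≥0∞} {p q : ℝ} (hpq : p.HolderConjugate q)
    (hf : AEMeasurable f μ) (hg : AEMeasurable g μ) :
    ∫⁻ x, f x * g x ∂μ ≤ eLpNorm f (.ofReal p) μ * eLpNorm g (.ofReal q) μ := by
  rw [eLpNorm_eq_eLpNorm' (by simp [hpq.pos]) (by simp),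
    eLpNorm_eq_eLpNorm' (by simp [hpq.symm.pos]) (by simp),
    ENNReal.toReal_ofReal hpq.nonneg, ENNReal.toReal_ofReal hpq.symm.nonneg]
  exact ENNReal.lintegral_mul_le_Lp_mul_Lq μ hpq hf hg

variable {G : Type*} [MeasurableSpace G] [AddGroup G] [MeasurableNeg G] {μ : Measure G}
  [μ.IsAddLeftInvariant] {f g : G → ℝ≥0∞}

theorem lconvolution_le_eLpNorm_mul_eLpNorm [MeasurableAdd G] [μ.IsNegInvariant] {p q : ℝ}
    (hpq : p.HolderConjugate q) (hf : AEMeasurable f μ) (hg : AEMeasurable g μ) (x : G) :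
    (f ⋆ₗ[μ] g) x ≤ eLpNorm f (.ofReal p) μ * eLpNorm g (.ofReal q) μ := by
  have hx : MeasurePreserving (fun y => -y + x) μ μ := by
    convert (Measure.measurePreserving_neg μ).comp (measurePreserving_add_left μ (-x)) using 2
    simp
  rw [← eLpNorm_comp_measurePreserving hg.aestronglyMeasurable hx]
  exact lintegral_mul_le_eLpNorm_mul_eLpNorm hpq hf 
    (hg.comp_quasiMeasurePreserving hx.quasiMeasurePreserving)

variable [MeasurableAdd₂ G] [SFinite μ]

lemma lintegral_lconvolution (hf : AEMeasurable f μ) (hg : AEMeasurable g μ) :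
    ∫⁻ x, (f ⋆ₗ[μ] g) x ∂μ = (∫⁻ x, f x ∂μ) * ∫⁻ x, g x ∂μ := by
  simp only [lconvolution_def]
  rw [lintegral_lintegral_swap (by fun_prop), ← lintegral_mul_const'' _ hf]
  refine lintegral_congr fun y => ?_
  have hy := (measurePreserving_add_left μ (-y)).quasiMeasurePreserving
  rw [lintegral_const_mul'' (f := fun x => g (-y + x)) _ (hg.comp_quasiMeasurePreserving hy),
    lintegral_add_left_eq_self]

theorem eLpNorm_lconvolution_le {p : ℝ≥0∞} (hp : 1 ≤ p) (hp_top : p ≠ ∞)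
    (hf : AEMeasurable f μ) (hg : AEMeasurable g μ) :
    eLpNorm (f ⋆ₗ[μ] g) p μ ≤ eLpNorm f 1 μ * eLpNorm g p μ := by
  have hp1 : 1 ≤ p.toReal := by simpa using ENNReal.toReal_mono hp_top hp
  have hp0 : 0 < p.toReal := one_pos.trans_le hp1
  rw [eLpNorm_eq_eLpNorm' (one_pos.trans_le hp).ne' hp_top,
    eLpNorm_eq_eLpNorm' (one_pos.trans_le hp).ne' hp_top, eLpNorm_one_eq_lintegral_enorm]
  simp only [eLpNorm', enorm_eq_self]
  rw [one_div, ENNReal.rpow_inv_le_iff hp0, ENNReal.mul_rpow_of_nonneg _ _ hp0.le,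
    ENNReal.rpow_inv_rpow hp0.ne']
  calc ∫⁻ x, (f ⋆ₗ[μ] g) x ^ p.toReal ∂μ
      ≤ ∫⁻ x, (∫⁻ y, f y ∂μ) ^ (p.toReal - 1) * (f ⋆ₗ[μ] fun y => g y ^ p.toReal) x ∂μ :=
        lintegral_mono fun x => lintegral_mul_rpow_le hp1 hf (by fun_prop)
    _ = (∫⁻ y, f y ∂μ) ^ (p.toReal - 1) *
          ((∫⁻ y, f y ∂μ) * ∫⁻ y, g y ^ p.toReal ∂μ) := by
        rw [lintegral_const_mul'' _ (aemeasurable_lconvolution hf (hg.pow_const _)),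
          lintegral_lconvolution hf (hg.pow_const _)]
    _ = (∫⁻ y, f y ∂μ) ^ p.toReal * ∫⁻ y, g y ^ p.toReal ∂μ := by
        rw [← mul_assoc]
        nth_rw 2 [← ENNReal.rpow_one (∫⁻ y, f y ∂μ)]
        rw [← ENNReal.rpow_add_of_nonneg _ _ (sub_nonneg.2 hp1) zero_le_one, sub_add_cancel]

end Young

section Discrete

variable {G : Type*} [MeasurableSpace G] [AddCommGroup G]

lemma lconvolution_left_comm [MeasurableAdd₂ G] [MeasurableNeg G] {μ : Measure G} [SFinite μ]
    [μ.IsAddLeftInvariant] [μ.IsNegInvariant] {f g h : G → ℝ≥0∞}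
    (hf : Measurable f) (hg : Measurable g) (hh : Measurable h) :
    f ⋆ₗ[μ] g ⋆ₗ[μ] h = g ⋆ₗ[μ] f ⋆ₗ[μ] h := by
  rw [lconvolution_assoc hf hg hh, lconvolution_comm (f := f), ← lconvolution_assoc hg hf hh]

lemma lconvolution_lconvolution_count [MeasurableSingletonClass G] (f g h : G → ℝ≥0∞) (x : G) :
    (f ⋆ₗ[.count] g ⋆ₗ[.count] h) x = ∑' y : G × G, f y.1 * g y.2 * h (x - y.1 - y.2) := by
  rw [ENNReal.tsum_prod']
  simp only [lconvolution_def, lintegral_count, ← ENNReal.tsum_mul_left]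
  refine tsum_congr fun y => tsum_congr fun z => ?_
  rw [mul_assoc, neg_add_eq_sub, neg_add_eq_sub]

end Discrete

lemma eLpNorm_two_count_sq {α ε : Type*} [MeasurableSpace α] [MeasurableSingletonClass α] [ENorm ε]
    (f : α → ε) : eLpNorm f 2 .count ^ 2 = ∑' x, ‖f x‖ₑ ^ 2 := by
  simpa [lintegral_count] using
    eLpNorm_nnreal_pow_eq_lintegral (f := f) (μ := .count) (p := 2) two_ne_zero

section Sobolev

variable {s : ℝ} {k : ℤ}

/-- The Fourier weight `⟨k⟩^s = (1 + k²)^{s/2}` of the Sobolev space `H^s`, valued in `ℝ≥0∞`. -/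
def sobolevWeight (s : ℝ) (k : ℤ) : ℝ≥0∞ := .ofReal ((1 + (k : ℝ) ^ 2) ^ (s / 2))

/-- The weighted moduli `⟨k⟩^s |f̂_k|`, whose `ℓ²` norm is the `H^s` norm up to the factor
`√(2π)`. -/
def sobolevDensity (s : ℝ) (a : FSeq) (k : ℤ) : ℝ≥0∞ := sobolevWeight s k * ‖a k‖ₑ

lemma sobolevWeight_zero (k : ℤ) : sobolevWeight 0 k = 1 := by simp [sobolevWeight]

lemma sobolevWeight_add (s t : ℝ) (k : ℤ) :
    sobolevWeight (s + t) k = sobolevWeight s k * sobolevWeight t k := by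
  rw [sobolevWeight, sobolevWeight, sobolevWeight, ← ENNReal.ofReal_mul (by positivity),
    ← Real.rpow_add (by positivity), add_div]

lemma sobolevWeight_sq (s : ℝ) (k : ℤ) :
    sobolevWeight s k ^ 2 = .ofReal ((1 + (k : ℝ) ^ 2) ^ s) := by
  rw [sq, ← sobolevWeight_add, sobolevWeight, add_self_div_two]

lemma enorm_le_sobolevWeight_one (k : ℤ) : ‖k‖ₑ ≤ sobolevWeight 1 k := by
  rw [sobolevWeight, ← Real.sqrt_eq_rpow, ← ofReal_norm, Int.norm_eq_abs]
  exact ENNReal.ofReal_le_ofReal (Real.abs_le_sqrt (by linarith))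

lemma enorm_mul_enorm_le_sobolevDensity_one (a : FSeq) (k : ℤ) :
    ‖k‖ₑ * ‖a k‖ₑ ≤ sobolevDensity 1 a k := by
  unfold sobolevDensity; gcongr; exact enorm_le_sobolevWeight_one k

lemma sobolevWeight_one_le (hk : k ≠ 0) : sobolevWeight 1 k ≤ 2 * ‖k‖ₑ := by
  have hk1 : (1 : ℝ) ≤ |(k : ℝ)| := by exact_mod_cast Int.one_le_abs hk
  rw [sobolevWeight, ← Real.sqrt_eq_rpow, ← ofReal_norm, Int.norm_eq_abs,
    ← ENNReal.ofReal_ofNat 2, ← ENNReal.ofReal_mul zero_le_two]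
  refine ENNReal.ofReal_le_ofReal (Real.sqrt_le_iff.2 ⟨by positivity, ?_⟩)
  nlinarith [sq_abs (k : ℝ)]

lemma inv_enorm_le_sobolevWeight_neg_one (hk : k ≠ 0) : ‖k‖ₑ⁻¹ ≤ 2 * sobolevWeight (-1) k := by
  have hk0 : ‖k‖ₑ ≠ 0 := enorm_ne_zero.2 hk
  calc ‖k‖ₑ⁻¹ = ‖k‖ₑ⁻¹ * (sobolevWeight (-1) k * sobolevWeight 1 k) := by
        rw [← sobolevWeight_add, neg_add_cancel, sobolevWeight_zero, mul_one]
    _ ≤ ‖k‖ₑ⁻¹ * (sobolevWeight (-1) k * (2 * ‖k‖ₑ)) := by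
        gcongr; exact sobolevWeight_one_le hk
    _ = (‖k‖ₑ⁻¹ * ‖k‖ₑ) * (2 * sobolevWeight (-1) k) := by ring
    _ = 2 * sobolevWeight (-1) k := by rw [ENNReal.inv_mul_cancel hk0 enorm_ne_top, one_mul]

lemma sobolevWeight_le {N : ℝ} (hN : 1 ≤ N) (hs : 0 ≤ s) (hk : |(k : ℝ)| ≤ N) :
    sobolevWeight s k ≤ .ofReal (2 ^ (s / 2) * N ^ s) := by
  have hN0 : 0 < N := one_pos.trans_le hN
  refine ENNReal.ofReal_le_ofReal ?_
  have hk2 : (k : ℝ) ^ 2 ≤ N ^ 2 := sq_le_sq.2 (by rwa [abs_of_pos hN0])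
  calc (1 + (k : ℝ) ^ 2) ^ (s / 2) ≤ (2 * N ^ 2) ^ (s / 2) :=
        Real.rpow_le_rpow (by positivity) (by nlinarith) (by positivity)
    _ = 2 ^ (s / 2) * N ^ s := by
        rw [Real.mul_rpow zero_le_two (by positivity), ← Real.rpow_natCast_mul hN0.le]
        congr 2; push_cast; ring

lemma eLpNorm_sobolevDensity_le {N : ℝ} (hN : 1 ≤ N) (hs : 0 ≤ s) {a : FSeq}
    (ha : ∀ k : ℤ, N < |(k : ℝ)| → a k = 0) :
    eLpNorm (sobolevDensity s a) 2 .count ≤ .ofReal (2 ^ (s / 2) * N ^ s) * eLpNorm a 2 .count := by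
  refine eLpNorm_le_mul_eLpNorm_of_ae_le_mul'' 2 .of_discrete (.of_forall fun k => ?_)
  rw [enorm_eq_self, sobolevDensity]
  rcases le_or_gt |(k : ℝ)| N with hk | hk
  · gcongr; exact sobolevWeight_le hN hs hk
  · simp [ha k hk]

lemma eLpNorm_sobolevWeight_neg_ne_top (hs : 1 / 2 < s) :
    eLpNorm (sobolevWeight (-s)) 2 .count ≠ ∞ := by
  have hsum : Summable fun k : ℤ => (1 + (k : ℝ) ^ 2) ^ (-s) := by
    refine .of_norm_bounded_eventually (Real.summable_abs_int_rpow (b := 2 * s) (by linarith)) ?_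
    filter_upwards [(Set.finite_singleton (0 : ℤ)).compl_mem_cofinite] with k hk
    have hk0 : (0 : ℝ) < (k : ℝ) ^ 2 := by
      have : (k : ℝ) ≠ 0 := by exact_mod_cast hk
      positivity
    rw [Real.norm_of_nonneg (by positivity), neg_mul_eq_mul_neg, Real.rpow_mul (abs_nonneg _),
      Real.rpow_two, sq_abs]
    exact Real.rpow_le_rpow_of_nonpos hk0 (by linarith) (by linarith)
  have hsq : eLpNorm (sobolevWeight (-s)) 2 .count ^ 2 ≠ ∞ := by
    rw [eLpNorm_two_count_sq]
    simpa only [enorm_eq_self, sobolevWeight_sq] using hsum.tsum_ofReal_ne_top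
  exact (ENNReal.pow_ne_top_iff.1 hsq).resolve_right two_ne_zero

lemma eLpNorm_sobolevWeight_ne_zero (s : ℝ) : eLpNorm (sobolevWeight s) 2 .count ≠ 0 := by
  intro h
  have hsum := eLpNorm_two_count_sq (sobolevWeight s)
  rw [h, zero_pow two_ne_zero] at hsum
  simpa [sobolevWeight] using ENNReal.tsum_eq_zero.1 hsum.symm 0

lemma eLpNorm_enorm_one_le (s : ℝ) (a : FSeq) :
    eLpNorm a 1 .count ≤
      eLpNorm (sobolevWeight (-s)) 2 .count * eLpNorm (sobolevDensity s a) 2 .count := by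
  have h : ∀ k, ‖a k‖ₑ = sobolevWeight (-s) k * sobolevDensity s a k := fun k => by
    rw [sobolevDensity, ← mul_assoc, ← sobolevWeight_add, neg_add_cancel, sobolevWeight_zero,
      one_mul]
  rw [eLpNorm_one_eq_lintegral_enorm]
  simp only [h]
  simpa using lintegral_mul_le_eLpNorm_mul_eLpNorm (μ := .count) .two_two
    (Measurable.of_discrete (f := sobolevWeight (-s))).aemeasurable
    (Measurable.of_discrete (f := sobolevDensity s a)).aemeasurable

lemma sobolevDensity_sq (s : ℝ) (a : FSeq) (k : ℤ) :
    sobolevDensity s a k ^ 2 = .ofReal ((1 + (k : ℝ) ^ 2) ^ s * ‖a k‖ ^ 2) := by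
  rw [sobolevDensity, mul_pow, sobolevWeight_sq, ← ofReal_norm,
    ← ENNReal.ofReal_pow (norm_nonneg _), ← ENNReal.ofReal_mul (by positivity)]

lemma InHs.eLpNorm_ne_top {a : FSeq} (ha : InHs s a) :
    eLpNorm (sobolevDensity s a) 2 .count ≠ ∞ := by
  have hsq : eLpNorm (sobolevDensity s a) 2 .count ^ 2 ≠ ∞ := by
    rw [eLpNorm_two_count_sq]
    simpa only [enorm_eq_self, sobolevDensity_sq] using ha.tsum_ofReal_ne_top
  exact (ENNReal.pow_ne_top_iff.1 hsq).resolve_right two_ne_zero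

lemma hnorm_eq (s : ℝ) (a : FSeq) :
    hnorm s a = √(2 * Real.pi) * (eLpNorm (sobolevDensity s a) 2 .count).toReal := by
  have h : (eLpNorm (sobolevDensity s a) 2 .count).toReal ^ 2 =
      ∑' k : ℤ, (1 + (k : ℝ) ^ 2) ^ s * ‖a k‖ ^ 2 := by
    rw [← ENNReal.toReal_pow, eLpNorm_two_count_sq]
    simp only [enorm_eq_self, sobolevDensity_sq]
    rw [ENNReal.tsum_toReal_eq fun _ => ENNReal.ofReal_ne_top]
    exact tsum_congr fun k => ENNReal.toReal_ofReal (by positivity)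
  rw [hnorm, ← h, Real.sqrt_mul (by positivity), Real.sqrt_sq ENNReal.toReal_nonneg]

lemma eLpNorm_lconvolution_sobolevDensity_le (s : ℝ) (a : FSeq) :
    eLpNorm ((‖a ·‖ₑ) ⋆ₗ[.count] sobolevDensity s a) 2 .count ≤
      eLpNorm (sobolevWeight (-s)) 2 .count * eLpNorm (sobolevDensity s a) 2 .count ^ 2 := calc
  _ ≤ eLpNorm (‖a ·‖ₑ) 1 .count * eLpNorm (sobolevDensity s a) 2 .count :=
    eLpNorm_lconvolution_le one_le_two (by simp) .of_discrete .of_discrete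
  _ ≤ (eLpNorm (sobolevWeight (-s)) 2 .count * eLpNorm (sobolevDensity s a) 2 .count) *
      eLpNorm (sobolevDensity s a) 2 .count := by
    gcongr; exact (eLpNorm_enorm a).trans_le (eLpNorm_enorm_one_le s a)
  _ = _ := by ring

lemma eLpNorm_lconvolution_lconvolution_sobolevDensity_le (s : ℝ) (a : FSeq) :
    eLpNorm ((‖a ·‖ₑ) ⋆ₗ[.count] (‖a ·‖ₑ) ⋆ₗ[.count] sobolevDensity s a) 2 .count ≤
      eLpNorm (sobolevWeight (-s)) 2 .count ^ 2 * eLpNorm (sobolevDensity s a) 2 .count ^ 3 := calc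
  _ ≤ eLpNorm (‖a ·‖ₑ) 1 .count *
      eLpNorm ((‖a ·‖ₑ) ⋆ₗ[.count] sobolevDensity s a) 2 .count :=
    eLpNorm_lconvolution_le one_le_two (by simp) .of_discrete .of_discrete
  _ ≤ (eLpNorm (sobolevWeight (-s)) 2 .count * eLpNorm (sobolevDensity s a) 2 .count) *
      (eLpNorm (sobolevWeight (-s)) 2 .count * eLpNorm (sobolevDensity s a) 2 .count ^ 2) := by
    gcongr
    · exact (eLpNorm_enorm a).trans_le (eLpNorm_enorm_one_le s a)
    · exact eLpNorm_lconvolution_sobolevDensity_le s a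
  _ = _ := by ring

lemma lconvolution_lconvolution_sobolevDensity_le (s : ℝ) (a : FSeq) (k : ℤ) :
    (sobolevDensity s a ⋆ₗ[.count] (‖a ·‖ₑ) ⋆ₗ[.count] sobolevDensity s a) k ≤
      eLpNorm (sobolevWeight (-s)) 2 .count * eLpNorm (sobolevDensity s a) 2 .count ^ 3 := calc
  _ ≤ eLpNorm (sobolevDensity s a) 2 .count *
      eLpNorm ((‖a ·‖ₑ) ⋆ₗ[.count] sobolevDensity s a) 2 .count := by
    simpa using lconvolution_le_eLpNorm_mul_eLpNorm (μ := .count) .two_two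
      (Measurable.of_discrete (f := sobolevDensity s a)).aemeasurable
      (Measurable.of_discrete
        (f := (‖a ·‖ₑ) ⋆ₗ[.count] sobolevDensity s a)).aemeasurable k
  _ ≤ eLpNorm (sobolevDensity s a) 2 .count *
      (eLpNorm (sobolevWeight (-s)) 2 .count * eLpNorm (sobolevDensity s a) 2 .count ^ 2) := by
    gcongr; exact eLpNorm_lconvolution_sobolevDensity_le s a
  _ = _ := by ring

end Sobolev

section Trilinear

variable {N : ℕ} {j : Fin 3} {k : ℤ} {V D : ℤ → ℝ≥0∞} {v f : FSeq}

/-- The majorant `∑ |k|⁻¹ |k_j| V(k₁) V(k₂) V(k₃)` over `k₁ + k₂ + k₃ = k`, `|k₁ + k₂| > N`, with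
`(k₁, k₂)` as the summation index and `j` counted from `0`. It takes values in `ℝ≥0∞`, so that
it needs no summability assumption. -/
def truncatedTrilinear (N : ℕ) (j : Fin 3) (V : ℤ → ℝ≥0∞) (k : ℤ) : ℝ≥0∞ :=
  ∑' p : ℤ × ℤ, if (N : ℤ) < |p.1 + p.2| then
    ‖k‖ₑ⁻¹ * ‖(![p.1, p.2, k - p.1 - p.2] j : ℤ)‖ₑ * (V p.1 * V p.2 * V (k - p.1 - p.2)) else 0

lemma natCast_le_enorm_of_lt_abs {m : ℤ} (hm : (N : ℤ) < |m|) : (N : ℝ≥0∞) ≤ ‖m‖ₑ := by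
  rw [← ofReal_norm, Int.norm_eq_abs, ← ENNReal.ofReal_natCast]
  exact ENNReal.ofReal_le_ofReal (by exact_mod_cast hm.le)

lemma natCast_mul_inv_enorm_mul_enorm_le (hk : k ≠ 0) {x y : ℤ} (hxy : (N : ℤ) < |x + y|) :
    N * (‖k‖ₑ⁻¹ * ‖(![x, y, k - x - y] j : ℤ)‖ₑ) ≤
      (‖x‖ₑ + ‖y‖ₑ) * (1 + ‖k‖ₑ⁻¹ * ‖k - x - y‖ₑ) := by
  have hN : (N : ℝ≥0∞) ≤ ‖x + y‖ₑ := natCast_le_enorm_of_lt_abs hxy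
  have hN₁₂ : (N : ℝ≥0∞) ≤ ‖x‖ₑ + ‖y‖ₑ := hN.trans (enorm_add_le x y)
  have hN₃ : N * ‖k‖ₑ⁻¹ ≤ 1 + ‖k‖ₑ⁻¹ * ‖k - x - y‖ₑ := calc
    N * ‖k‖ₑ⁻¹ ≤ (‖k‖ₑ + ‖k - x - y‖ₑ) * ‖k‖ₑ⁻¹ := by
      gcongr
      refine hN.trans ?_
      simpa [sub_sub] using enorm_sub_le (a := k) (b := k - x - y)
    _ = 1 + ‖k‖ₑ⁻¹ * ‖k - x - y‖ₑ := by
      rw [add_mul, ENNReal.mul_inv_cancel (enorm_ne_zero.2 hk) enorm_ne_top, mul_comm ‖k - x - y‖ₑ]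
  fin_cases j
  · calc N * (‖k‖ₑ⁻¹ * ‖x‖ₑ) = ‖x‖ₑ * (N * ‖k‖ₑ⁻¹) := by ring
      _ ≤ _ := mul_le_mul' le_self_add hN₃
  · calc N * (‖k‖ₑ⁻¹ * ‖y‖ₑ) = ‖y‖ₑ * (N * ‖k‖ₑ⁻¹) := by ring
      _ ≤ _ := mul_le_mul' le_add_self hN₃
  · exact mul_le_mul' hN₁₂ le_add_self

lemma natCast_mul_trilinear_term_le (hD : ∀ m, ‖m‖ₑ * V m ≤ D m) (hk : k ≠ 0) {x y : ℤ}
    (hxy : (N : ℤ) < |x + y|) :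
    N * (‖k‖ₑ⁻¹ * ‖(![x, y, k - x - y] j : ℤ)‖ₑ * (V x * V y * V (k - x - y))) ≤
      D x * V y * V (k - x - y) + V x * D y * V (k - x - y) +
        ‖k‖ₑ⁻¹ * (D x * V y * D (k - x - y) + V x * D y * D (k - x - y)) := calc
  _ = N * (‖k‖ₑ⁻¹ * ‖(![x, y, k - x - y] j : ℤ)‖ₑ) * (V x * V y * V (k - x - y)) := by
    ring
  _ ≤ (‖x‖ₑ + ‖y‖ₑ) * (1 + ‖k‖ₑ⁻¹ * ‖k - x - y‖ₑ) * (V x * V y * V (k - x - y)) :=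
    mul_le_mul_left (natCast_mul_inv_enorm_mul_enorm_le hk hxy) _
  _ = (‖x‖ₑ * V x * V y + V x * (‖y‖ₑ * V y)) *
        (V (k - x - y) + ‖k‖ₑ⁻¹ * (‖k - x - y‖ₑ * V (k - x - y))) := by ring
  _ ≤ (D x * V y + V x * D y) * (V (k - x - y) + ‖k‖ₑ⁻¹ * D (k - x - y)) := by
    gcongr <;> exact hD _
  _ = _ := by ring

lemma natCast_mul_truncatedTrilinear_le (hD : ∀ m, ‖m‖ₑ * V m ≤ D m) (hk : k ≠ 0) :
    N * truncatedTrilinear N j V k ≤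
      2 * (V ⋆ₗ[.count] V ⋆ₗ[.count] D) k +
        ‖k‖ₑ⁻¹ * (2 * (D ⋆ₗ[.count] V ⋆ₗ[.count] D) k) := by
  have hVVD : D ⋆ₗ[.count] V ⋆ₗ[.count] V = V ⋆ₗ[.count] V ⋆ₗ[.count] D := by
    rw [lconvolution_left_comm .of_discrete .of_discrete .of_discrete, lconvolution_comm (f := D)]
  have hVDV : V ⋆ₗ[.count] D ⋆ₗ[.count] V = V ⋆ₗ[.count] V ⋆ₗ[.count] D := by
    rw [lconvolution_comm (f := D)]
  have hVDD : V ⋆ₗ[.count] D ⋆ₗ[.count] D = D ⋆ₗ[.count] V ⋆ₗ[.count] D :=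
    lconvolution_left_comm .of_discrete .of_discrete .of_discrete
  calc N * truncatedTrilinear N j V k
      ≤ ∑' p : ℤ × ℤ, (D p.1 * V p.2 * V (k - p.1 - p.2) + V p.1 * D p.2 * V (k - p.1 - p.2) +
          ‖k‖ₑ⁻¹ * (D p.1 * V p.2 * D (k - p.1 - p.2) + V p.1 * D p.2 * D (k - p.1 - p.2))) := by
        rw [truncatedTrilinear, ← ENNReal.tsum_mul_left]
        refine ENNReal.tsum_le_tsum fun p => ?_
        split_ifs with hp
        · exact natCast_mul_trilinear_term_le hD hk hp
        · simp
    _ = (D ⋆ₗ[.count] V ⋆ₗ[.count] V) k + (V ⋆ₗ[.count] D ⋆ₗ[.count] V) k +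
          ‖k‖ₑ⁻¹ * ((D ⋆ₗ[.count] V ⋆ₗ[.count] D) k + (V ⋆ₗ[.count] D ⋆ₗ[.count] D) k) := by
        simp only [ENNReal.tsum_add, ENNReal.tsum_mul_left, lconvolution_lconvolution_count]
    _ = _ := by rw [hVVD, hVDV, hVDD, two_mul, two_mul]

lemma enorm_le_truncatedTrilinear (hk : k ≠ 0)
    (hf : ‖f k‖ ≤ ∑' p : ℤ × ℤ, (if (N : ℤ) < |p.1 + p.2| then
      (|(k : ℝ)|)⁻¹ * |((![p.1, p.2, k - p.1 - p.2] j : ℤ) : ℝ)| *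
        (‖v p.1‖ * ‖v p.2‖ * ‖v (k - p.1 - p.2)‖) else 0)) :
    ‖f k‖ₑ ≤ truncatedTrilinear N j (‖v ·‖ₑ) k := by
  have hcast : ∀ m : ℤ, ‖(m : ℝ)‖ₑ = ‖m‖ₑ := fun m => by
    rw [← ofReal_norm, ← ofReal_norm, Int.norm_cast_real]
  refine (enorm_le_iff_norm_le.2 (hf.trans (Real.le_norm_self _))).trans ?_
  refine enorm_tsum_le_tsum_enorm.trans (ENNReal.tsum_le_tsum fun p => ?_)
  split_ifs
  · simp [enorm_mul, enorm_inv, Real.enorm_abs, hcast, hk]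
  · simp

theorem natCast_mul_eLpNorm_le_of_enorm_le_truncatedTrilinear
    (hf : ∀ k ≠ 0, ‖f k‖ₑ ≤ truncatedTrilinear N j (‖v ·‖ₑ) k) (hf0 : f 0 = 0) :
    N * eLpNorm f 2 .count ≤
      6 * eLpNorm (sobolevWeight (-1)) 2 .count ^ 2 *
        eLpNorm (sobolevDensity 1 v) 2 .count ^ 3 := by
  set V : ℤ → ℝ≥0∞ := (‖v ·‖ₑ)
  set D := sobolevDensity 1 v
  set w := sobolevWeight (-1)
  set K := eLpNorm w 2 .count * eLpNorm D 2 .count ^ 3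
  have hpt : ∀ k, ‖(N • f) k‖ₑ ≤
      ‖2 * (V ⋆ₗ[.count] V ⋆ₗ[.count] D) k + 4 * K * w k‖ₑ := fun k => by
    rcases eq_or_ne k 0 with rfl | hk
    · simp [hf0]
    calc ‖(N • f) k‖ₑ = N * ‖f k‖ₑ := by
          rw [Pi.smul_apply, nsmul_eq_mul, enorm_mul, ← enorm_norm, Complex.norm_natCast,
            Real.enorm_natCast]
      _ ≤ N * truncatedTrilinear N j V k := by gcongr; exact hf k hk
      _ ≤ _ := natCast_mul_truncatedTrilinear_le (enorm_mul_enorm_le_sobolevDensity_one v) hk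
      _ ≤ 2 * (V ⋆ₗ[.count] V ⋆ₗ[.count] D) k + 2 * w k * (2 * K) := by
        gcongr
        · exact inv_enorm_le_sobolevWeight_neg_one hk
        · exact lconvolution_lconvolution_sobolevDensity_le 1 v k
      _ = _ := by rw [enorm_eq_self]; ring
  calc N * eLpNorm f 2 .count = eLpNorm (N • f) 2 .count := (eLpNorm_nsmul N f).symm
    _ ≤ eLpNorm (fun k => 2 * (V ⋆ₗ[.count] V ⋆ₗ[.count] D) k) 2 .count +
          eLpNorm (fun k => 4 * K * w k) 2 .count :=
      (eLpNorm_mono_enorm hpt).trans (eLpNorm_add_le .of_discrete .of_discrete one_le_two)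
    _ ≤ 2 * eLpNorm (V ⋆ₗ[.count] V ⋆ₗ[.count] D) 2 .count + 4 * K * eLpNorm w 2 .count := by
      gcongr <;>
        exact eLpNorm_le_mul_eLpNorm_of_ae_le_mul'' 2 .of_discrete (.of_forall fun k => by simp)
    _ ≤ 2 * (eLpNorm w 2 .count ^ 2 * eLpNorm D 2 .count ^ 3) + 4 * K * eLpNorm w 2 .count := by
      gcongr; exact eLpNorm_lconvolution_lconvolution_sobolevDensity_le 1 v
    _ = _ := by simp only [K]; ring

theorem hnorm_le_of_enorm_le_truncatedTrilinear {s : ℝ} (hN : 0 < N) (hs : 0 ≤ s) (hv : InHs 1 v)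
    (hf : ∀ k ≠ 0, ‖f k‖ₑ ≤ truncatedTrilinear N j (‖v ·‖ₑ) k) (hf0 : f 0 = 0)
    (hfN : ∀ k : ℤ, (N : ℤ) < |k| → f k = 0) :
    hnorm s f ≤
      2 ^ (s / 2) * (6 * (eLpNorm (sobolevWeight (-1)) 2 .count).toReal ^ 2 / (2 * Real.pi)) *
        N ^ (-1 + s) * hnorm 1 v ^ 3 := by
  set W := eLpNorm (sobolevWeight (-1)) 2 .count
  set D := eLpNorm (sobolevDensity 1 v) 2 .count
  have hW : W ≠ ∞ := eLpNorm_sobolevWeight_neg_ne_top (by norm_num)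
  have hD : D ≠ ∞ := hv.eLpNorm_ne_top
  have hN1 : (1 : ℝ) ≤ N := by exact_mod_cast hN
  have hfs : N * eLpNorm (sobolevDensity s f) 2 .count ≤
      .ofReal (2 ^ (s / 2) * N ^ s) * (6 * W ^ 2 * D ^ 3) := calc
    _ ≤ N * (.ofReal (2 ^ (s / 2) * N ^ s) * eLpNorm f 2 .count) := by
      gcongr
      exact eLpNorm_sobolevDensity_le hN1 hs fun k hk => hfN k (by exact_mod_cast hk)
    _ = .ofReal (2 ^ (s / 2) * N ^ s) * (N * eLpNorm f 2 .count) := mul_left_comm ..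
    _ ≤ _ := mul_le_mul_right (natCast_mul_eLpNorm_le_of_enorm_le_truncatedTrilinear hf hf0) _
  have hfs_real : (eLpNorm (sobolevDensity s f) 2 .count).toReal ≤
      2 ^ (s / 2) * N ^ s * (6 * W.toReal ^ 2 * D.toReal ^ 3) / N := by
    rw [le_div_iff₀' (by positivity)]
    have hpos : (0 : ℝ) ≤ 2 ^ (s / 2) * N ^ s := by positivity
    simpa only [ENNReal.toReal_mul, ENNReal.toReal_pow, ENNReal.toReal_natCast,
      ENNReal.toReal_ofNat, ENNReal.toReal_ofReal hpos] using
      ENNReal.toReal_mono (by finiteness) hfs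
  have hpi : √(2 * Real.pi) ^ 3 = 2 * Real.pi * √(2 * Real.pi) := by
    rw [pow_succ, Real.sq_sqrt (by positivity)]
  calc hnorm s f ≤ √(2 * Real.pi) *
        (2 ^ (s / 2) * N ^ s * (6 * W.toReal ^ 2 * D.toReal ^ 3) / N) := by
        rw [hnorm_eq]; gcongr
    _ = _ := by
        rw [hnorm_eq 1 v, mul_pow, hpi, Real.rpow_add (by positivity), Real.rpow_neg_one]
        simp only [D]
        field_simp

end Trilinear

theorem T3_truncated_bound_general (S : ℝ) :
    ∃ C : ℝ, 0 < C ∧ ∀ N : ℕ, 0 < N → ∀ s : ℝ, s ∈ Set.Icc (0 : ℝ) S →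
      ∀ j : Fin 3, ∀ v f : FSeq, InHs 1 v →
      (∀ k : ℤ, k ≠ 0 → |k| ≤ (N : ℤ) → ‖f k‖ ≤
        ∑' p : ℤ × ℤ, (if (N : ℤ) < |p.1 + p.2| then
          (|(k : ℝ)|)⁻¹ * |((![p.1, p.2, k - p.1 - p.2] j : ℤ) : ℝ)| *
            (‖v p.1‖ * ‖v p.2‖ * ‖v (k - p.1 - p.2)‖) else 0)) →
      f 0 = 0 → (∀ k : ℤ, (N : ℤ) < |k| → f k = 0) →
      hnorm s f ≤ C * (N : ℝ) ^ (-1 + s) * hnorm 1 v ^ 3 := by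
  have hW : 0 < (eLpNorm (sobolevWeight (-1)) 2 .count).toReal := ENNReal.toReal_pos
    (eLpNorm_sobolevWeight_ne_zero _) (eLpNorm_sobolevWeight_neg_ne_top (by norm_num))
  refine ⟨2 ^ (S / 2) * (6 * (eLpNorm (sobolevWeight (-1)) 2 .count).toReal ^ 2 / (2 * Real.pi)),
    by positivity, fun N hN s hs j v f hv hf hf0 hfN => ?_⟩
  have hf' : ∀ k ≠ 0, ‖f k‖ₑ ≤ truncatedTrilinear N j (‖v ·‖ₑ) k := fun k hk => by
    rcases le_or_gt |k| N with hkN | hkN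
    · exact enorm_le_truncatedTrilinear hk (hf k hk hkN)
    · simp [hfN k hkN]
  refine (hnorm_le_of_enorm_le_truncatedTrilinear hN hs.1 hv hf' hf0 hfN).trans ?_
  have hv0 : 0 ≤ hnorm 1 v := Real.sqrt_nonneg _
  gcongr
  · exact one_le_two
  · exact hs.2

theorem T3_truncated_bound :
    ∃ C : ℝ, 0 < C ∧ ∀ N : ℕ, 10 ≤ N → ∀ s : ℝ, s ∈ Set.Icc (0 : ℝ) 1 →
      ∀ j : Fin 3, ∀ v f : FSeq, InHs 1 v → InHs 0 f →
      (∀ k : ℤ, k ≠ 0 → |k| ≤ (N : ℤ) → ‖f k‖ ≤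
        ∑' p : ℤ × ℤ, (if (N : ℤ) < |p.1 + p.2| then
          (|(k : ℝ)|)⁻¹ * |((![p.1, p.2, k - p.1 - p.2] j : ℤ) : ℝ)| *
            (‖v p.1‖ * ‖v p.2‖ * ‖v (k - p.1 - p.2)‖) else 0)) →
      f 0 = 0 → (∀ k : ℤ, (N : ℤ) < |k| → f k = 0) →
      hnorm s f ≤ C * (N : ℝ) ^ (-1 + s) * hnorm 1 v ^ 3 := by
  obtain ⟨C, hC, h⟩ := T3_truncated_bound_general 1
  exact ⟨C, hC, fun N hN s hs j v f hv _ => h N (by omega) s hs j v f hv⟩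

end
end
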